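/- arXiv:2005.08166 — 4 statements merged into one kernel-verified Lean document; each statement's English description precedes it below -/
import Mathlib

section
/- For integers r, s ≥ 0 with r + s ≥ 1, the first prolongation of so(r,s) is zero, and the first prolongation of co(r,s) equals { Z∧(·) + (Z,·)·id : Z ∈ ℝ^{r,s} }; moreover the map Z ↦ (X ↦ Z∧X + (Z,X)·id) is an injective linear map, so co(r,s)^{(1)} is isomorphic to ℝ^{r,s} as a vector space. -/
open Module

noncomputable section

namespace Weyl

variable {V : Type*} [AddCommGroup V] [Module ℝ V]

/-- The endomorphism `X ∧ Y : Z ↦ B(X,Z)•Y − B(Y,Z)•X`. -/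
def wedge (B : LinearMap.BilinForm ℝ V) (X Y : V) : Module.End ℝ V where
  toFun Z := B X Z • Y - B Y Z • X
  map_add' z z' := by simp only [map_add, add_smul]; abel
  map_smul' c z := by simp only [map_smul, smul_eq_mul, RingHom.id_apply, mul_smul, smul_sub]

/-- The Lie algebra `so(B)` of endomorphisms skew-symmetric with respect to `B`. -/
def soSet (B : LinearMap.BilinForm ℝ V) : Set (Module.End ℝ V) :=
  {A | ∀ x y, B (A x) y + B x (A y) = 0}

/-- The conformal Lie algebra `co(B) = ℝ·id ⊕ so(B)`. -/
def coSet (B : LinearMap.BilinForm ℝ V) : Set (Module.End ℝ V) :=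
  {F | ∃ c : ℝ, ∃ S ∈ soSet B, F = c • (1 : Module.End ℝ V) + S}

/-- The first prolongation `g^{(1)}` of a set of endomorphisms:
linear maps `φ : V → g` with `φ(X)Y = φ(Y)X`. -/
def firstProlong (g : Set (Module.End ℝ V)) : Set (V →ₗ[ℝ] Module.End ℝ V) :=
  {φ | (∀ x, φ x ∈ g) ∧ ∀ x y, φ x y = φ y x}

/-- `R` is an algebraic curvature tensor of type `g` (a linear map on `Λ²V`,
encoded as an antisymmetric bilinear map, with values in `g`, satisfying the
Bianchi identity). -/
def IsCurv (g : Set (Module.End ℝ V)) (R : V →ₗ[ℝ] V →ₗ[ℝ] Module.End ℝ V) : Prop :=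
  (∀ x y, R x y = - R y x) ∧ (∀ x y, R x y ∈ g) ∧
    ∀ x y z, R x y z + R y z x + R z x y = 0

/-- `L(ℛ(g))`: the span of all values of algebraic curvature tensors of type `g`. -/
def curvSpan (g : Set (Module.End ℝ V)) : Submodule ℝ (Module.End ℝ V) :=
  Submodule.span ℝ {F | ∃ R, IsCurv g R ∧ ∃ x y, F = R x y}

/-- `g` is a Berger algebra: `L(ℛ(g)) = g`. -/
def IsBerger (g : Set (Module.End ℝ V)) : Prop :=
  (curvSpan g : Set (Module.End ℝ V)) = g

/-- `g` is (the underlying set of) a Lie subalgebra of `gl(V)`. -/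
def IsLieSub (g : Set (Module.End ℝ V)) : Prop :=
  (0 : Module.End ℝ V) ∈ g ∧ (∀ F ∈ g, ∀ F' ∈ g, F + F' ∈ g) ∧
    (∀ (c : ℝ), ∀ F ∈ g, c • F ∈ g) ∧ ∀ F ∈ g, ∀ F' ∈ g, F * F' - F' * F ∈ g

/-- The subspace `W` is invariant under every element of `g`. -/
def Invariant (g : Set (Module.End ℝ V)) (W : Submodule ℝ V) : Prop :=
  ∀ F ∈ g, ∀ x ∈ W, F x ∈ W

/-- The restriction of `B` to `W` is nondegenerate. -/
def IsNondegOn (B : LinearMap.BilinForm ℝ V) (W : Submodule ℝ V) : Prop :=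
  ∀ x ∈ W, (∀ y ∈ W, B x y = 0) → x = 0

/-- Weak irreducibility: no proper nonzero invariant nondegenerate subspace. -/
def WeaklyIrred (B : LinearMap.BilinForm ℝ V) (g : Set (Module.End ℝ V)) : Prop :=
  ∀ W : Submodule ℝ V, Invariant g W → IsNondegOn B W → W = ⊥ ∨ W = ⊤

/-- Irreducibility: no proper nonzero invariant subspace. -/
def Irred (g : Set (Module.End ℝ V)) : Prop :=
  ∀ W : Submodule ℝ V, Invariant g W → W = ⊥ ∨ W = ⊤

/-- The standard nondegenerate symmetric bilinear form of signature `(r,s)` on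
`ℝ^{r,s} = Fin (r+s) → ℝ` (the first `r` coordinates are timelike). -/
def psForm (r s : ℕ) : LinearMap.BilinForm ℝ (Fin (r + s) → ℝ) :=
  LinearMap.mk₂ ℝ
    (fun x y => ∑ i : Fin (r + s), (if (i : ℕ) < r then (-1 : ℝ) else 1) * (x i * y i))
    (fun x x' y => by
      simp only [Pi.add_apply, add_mul, mul_add, Finset.sum_add_distrib])
    (fun c x y => by
      simp only [Pi.smul_apply, smul_eq_mul, Finset.mul_sum]
      exact Finset.sum_congr rfl fun i _ => by ring)
    (fun x y y' => by
      simp only [Pi.add_apply, add_mul, mul_add, Finset.sum_add_distrib])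
    (fun c x y => by
      simp only [Pi.smul_apply, smul_eq_mul, Finset.mul_sum]
      exact Finset.sum_congr rfl fun i _ => by ring)

/-- The map `Z ↦ (X ↦ Z∧X + B(Z,X)·id)`. -/
def proMap (B : LinearMap.BilinForm ℝ V) (Z : V) : V →ₗ[ℝ] Module.End ℝ V where
  toFun X := wedge B Z X + B Z X • (1 : Module.End ℝ V)
  map_add' X X' := by
    ext w
    simp [wedge, map_add, add_smul, smul_add]
    abel
  map_smul' c X := by
    ext w
    simp [wedge, map_smul, smul_smul, smul_sub, smul_add]
    ring_nf

theorem psForm_apply (r s : ℕ) (x y : Fin (r + s) → ℝ) :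
    psForm r s x y = ∑ i : Fin (r + s), (if (i : ℕ) < r then (-1 : ℝ) else 1) * (x i * y i) := rfl

theorem psForm_comm (r s : ℕ) (x y : Fin (r + s) → ℝ) : psForm r s x y = psForm r s y x := by
  simp only [psForm_apply, mul_comm (x _)]

theorem psForm_single (r s : ℕ) (x : Fin (r + s) → ℝ) (i : Fin (r + s)) :
    psForm r s x (Pi.single i 1) = (if (i : ℕ) < r then (-1 : ℝ) else 1) * x i := by
  rw [psForm_apply, Finset.sum_eq_single i]
  · simp
  · intro j _ hj
    simp [Pi.single_apply, hj]
  · simp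

theorem psForm_nondeg (r s : ℕ) (x : Fin (r + s) → ℝ) (h : ∀ y, psForm r s x y = 0) : x = 0 := by
  funext i
  have := h (Pi.single i 1)
  rw [psForm_single] at this
  split_ifs at this <;> simpa using this

/-- Every linear functional is represented by the form. -/
theorem psForm_repr (r s : ℕ) (f : (Fin (r + s) → ℝ) →ₗ[ℝ] ℝ) :
    ∃ Z, ∀ x, psForm r s Z x = f x := by
  refine ⟨fun i => (if (i : ℕ) < r then (-1 : ℝ) else 1) * f (Pi.single i 1), fun x => ?_⟩
  have : psForm r s (fun i => (if (i : ℕ) < r then (-1 : ℝ) else 1) * f (Pi.single i 1)) = f := by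
    refine LinearMap.pi_ext' fun i => LinearMap.ext_ring ?_
    simp only [LinearMap.comp_apply, LinearMap.single_apply]
    rw [psForm_single]
    split_ifs <;> simp
  rw [this]

theorem proMap_apply (B : LinearMap.BilinForm ℝ V) (Z X Y : V) :
    proMap B Z X Y = B Z Y • X - B X Y • Z + B Z X • Y := rfl

theorem proMap_conf (B : LinearMap.BilinForm ℝ V) (hB : ∀ x y, B x y = B y x) (Z X y z : V) :
    B (proMap B Z X y) z + B y (proMap B Z X z) = 2 * B Z X * B y z := by
  simp only [proMap_apply, map_add, map_sub, map_smul, LinearMap.add_apply, LinearMap.sub_apply,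
    LinearMap.smul_apply, smul_eq_mul]
  rw [hB y X, hB y Z]
  ring

theorem mem_coSet_conf (B : LinearMap.BilinForm ℝ V) (F : Module.End ℝ V) :
    F ∈ coSet B ↔ ∃ c : ℝ, ∀ y z, B (F y) z + B y (F z) = 2 * c * B y z := by
  constructor
  · rintro ⟨c, S, hS, rfl⟩
    refine ⟨c, fun y z => ?_⟩
    have := hS y z
    simp only [map_add, map_smul, LinearMap.add_apply, LinearMap.smul_apply, smul_eq_mul,
      Module.End.one_apply]
    linarith
  · rintro ⟨c, h⟩
    refine ⟨c, F - c • 1, fun y z => ?_, by abel⟩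
    have := h y z
    simp only [map_sub, map_smul, LinearMap.sub_apply, LinearMap.smul_apply, smul_eq_mul,
      Module.End.one_apply]
    linarith

theorem so_prolong_zero (B : LinearMap.BilinForm ℝ V)
    (hnd : ∀ x, (∀ y, B x y = 0) → x = 0) (hB : ∀ x y, B x y = B y x)
    (φ : V →ₗ[ℝ] Module.End ℝ V) (h : φ ∈ firstProlong (soSet B)) : φ = 0 := by
  obtain ⟨h1, h2⟩ := h
  refine LinearMap.ext fun x => LinearMap.ext fun y => hnd _ fun z => ?_
  have a1 := h1 x y z
  have a2 := h1 y z x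
  have a3 := h1 z x y
  rw [hB y] at a1
  rw [hB z] at a2
  rw [hB x] at a3
  rw [h2 y x] at a2
  rw [h2 z x, h2 z y] at a3
  linarith

/-- For `r + s ≥ 1`: the first prolongation of `so(r,s)` is zero; the first
prolongation of `co(r,s)` is `{Z∧(·) + (Z,·)·id : Z ∈ ℝ^{r,s}}`; and the map
`Z ↦ (X ↦ Z∧X + (Z,X)·id)` is an injective linear map, so `co(r,s)^{(1)} ≅ ℝ^{r,s}`
as a vector space. -/
theorem prolongation_of_so_and_co (r s : ℕ) (hrs : 1 ≤ r + s) :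
    firstProlong (soSet (psForm r s)) = {0} ∧
    firstProlong (coSet (psForm r s)) = Set.range (proMap (psForm r s)) ∧
    Function.Injective (proMap (psForm r s)) ∧
    (∀ Z Z' : Fin (r + s) → ℝ,
      proMap (psForm r s) (Z + Z') = proMap (psForm r s) Z + proMap (psForm r s) Z') ∧
    (∀ (c : ℝ) (Z : Fin (r + s) → ℝ),
      proMap (psForm r s) (c • Z) = c • proMap (psForm r s) Z) := by
  have hB := psForm_comm r s
  have hnd := psForm_nondeg r s
  obtain ⟨e, he⟩ : ∃ e, psForm r s e e ≠ 0 := by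
    refine ⟨Pi.single ⟨0, hrs⟩ 1, ?_⟩
    rw [psForm_single]
    split_ifs <;> simp
  refine ⟨?_, ?_, ?_, ?_, ?_⟩
  · refine Set.eq_singleton_iff_unique_mem.2 ⟨⟨fun x y z => by simp, fun x y => by simp⟩, ?_⟩
    exact fun φ h => so_prolong_zero _ hnd hB φ h
  · ext φ
    constructor
    · rintro ⟨h1, h2⟩
      simp only [mem_coSet_conf] at h1
      choose c hc using h1
      let f : (Fin (r + s) → ℝ) →ₗ[ℝ] ℝ :=
        (psForm r s e e)⁻¹ • ((psForm r s e).comp (φ.flip e))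
      have hf : ∀ x, f x = c x := by
        intro x
        have := hc x e e
        rw [hB (φ x e) e] at this
        simp only [f, LinearMap.smul_apply, LinearMap.comp_apply, LinearMap.flip_apply, smul_eq_mul]
        field_simp
        linarith
      obtain ⟨Z, hZ⟩ := psForm_repr r s f
      refine ⟨Z, ?_⟩
      have h0 : φ - proMap (psForm r s) Z = 0 := by
        refine so_prolong_zero _ hnd hB _ ⟨fun x y z => ?_, fun x y => ?_⟩
        · have a := hc x y z
          have b := proMap_conf _ hB Z x y z
          rw [hZ, hf] at b
          simp only [LinearMap.sub_apply, map_sub]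
          linarith
        · simp only [LinearMap.sub_apply, h2 x y, proMap_apply, hB x y]
          abel
      exact (sub_eq_zero.1 h0).symm
    · rintro ⟨Z, rfl⟩
      refine ⟨fun x => (mem_coSet_conf _ _).2 ⟨_, proMap_conf _ hB Z x⟩, fun x y => ?_⟩
      simp only [proMap_apply, hB x y]
      abel
  · intro Z Z' h
    refine sub_eq_zero.1 (hnd _ fun x => ?_)
    have a := proMap_conf _ hB Z x e e
    have b := proMap_conf _ hB Z' x e e
    rw [h, b] at a
    have := mul_right_cancel₀ he a
    rw [map_sub, LinearMap.sub_apply]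
    linarith
  · intro Z Z'
    refine LinearMap.ext fun x => LinearMap.ext fun y => ?_
    simp only [LinearMap.add_apply, proMap_apply, map_add, add_smul, smul_add]
    abel
  · intro c Z
    refine LinearMap.ext fun x => LinearMap.ext fun y => ?_
    simp only [LinearMap.smul_apply, proMap_apply, map_smul, smul_add, smul_sub, smul_eq_mul,
      mul_smul, smul_comm c (psForm r s x y)]

end Weyl
end
end

section
/- Let V be a pseudo-Euclidean space with a nontrivial orthogonal decomposition V = V₁ ⊕ V₂ into nonzero nondegenerate subspaces. Then for every algebraic curvature tensor R ∈ ℛ(so(V₁) ⊕ so(V₂) ⊕ ℝ·id_V) there exist unique R₁ ∈ ℛ(so(V₁)) and R₂ ∈ ℛ(so(V₂)) (each extended by zero, i.e. R₁ vanishes on all bivectors involving V₂ and R₂ on all bivectors involving V₁) and a unique linear map Z : V₂ → V₁ such that R = R₁ + R₂ + R₃, where R₃ vanishes on Λ²V₁ and on Λ²V₂ and R₃(X₁,X₂) = Z(X₂)∧X₁ + Z*(X₁)∧X₂ + (Z(X₂),X₁)·id_V for X₁ ∈ V₁, X₂ ∈ V₂, with Z* : V₁ → V₂ the adjoint of Z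 with respect to the forms. Conversely every such sum R₁ + R₂ + R₃ lies in ℛ(so(V₁) ⊕ so(V₂) ⊕ ℝ·id_V); consequently ℛ(so(V₁) ⊕ so(V₂) ⊕ ℝ·id_V) ≅ ℛ(so(V₁)) ⊕ ℛ(so(V₂)) ⊕ V₁⊗V₂. -/
open Module

noncomputable section

namespace Weyl

variable {V : Type*} [AddCommGroup V] [Module ℝ V]

/-- `so(W)` regarded as a subalgebra of `so(V)`: skew-symmetric endomorphisms
preserving `W` and acting by zero on the complementary summand `W'`. -/
def soPart (B : LinearMap.BilinForm ℝ V) (W W' : Submodule ℝ V) :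
    Set (Module.End ℝ V) :=
  {A | A ∈ soSet B ∧ (∀ x ∈ W, A x ∈ W) ∧ ∀ y ∈ W', A y = 0}

/-- The decomposition `R = R₁ + R₂ + R₃` of an algebraic curvature tensor of
type `so(V₁) ⊕ so(V₂) ⊕ ℝ·id`: `R₁ ∈ ℛ(so(V₁))` and `R₂ ∈ ℛ(so(V₂))` extended
by zero, `Z : V₂ → V₁` with adjoint `W = Z*`, and `R₃` vanishes on `Λ²V₁` and
`Λ²V₂` and is given by `R₃(X₁,X₂) = Z(X₂)∧X₁ + Z*(X₁)∧X₂ + (Z(X₂),X₁)·id` for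
`X₁ ∈ V₁`, `X₂ ∈ V₂`. -/
def Decomp (B : LinearMap.BilinForm ℝ V) (V₁ V₂ : Submodule ℝ V)
    (R R₁ R₂ : V →ₗ[ℝ] V →ₗ[ℝ] Module.End ℝ V) (Z W : Module.End ℝ V) : Prop :=
  IsCurv (soPart B V₁ V₂) R₁ ∧
  (∀ x y : V, x ∈ V₂ ∨ y ∈ V₂ → R₁ x y = 0) ∧
  IsCurv (soPart B V₂ V₁) R₂ ∧
  (∀ x y : V, x ∈ V₁ ∨ y ∈ V₁ → R₂ x y = 0) ∧
  (∀ y ∈ V₂, Z y ∈ V₁) ∧ (∀ x ∈ V₁, Z x = 0) ∧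
  (∀ x ∈ V₁, W x ∈ V₂) ∧ (∀ y ∈ V₂, W y = 0) ∧
  (∀ x y, B (Z x) y = B x (W y)) ∧
  (∀ x y, R x y = - R y x) ∧
  (∀ x ∈ V₁, ∀ y ∈ V₁, R x y = R₁ x y + R₂ x y) ∧
  (∀ x ∈ V₂, ∀ y ∈ V₂, R x y = R₁ x y + R₂ x y) ∧
  (∀ x ∈ V₁, ∀ y ∈ V₂,
    R x y = R₁ x y + R₂ x y + wedge B (Z y) x + wedge B (W x) y +
      (B (Z y) x) • (1 : Module.End ℝ V))

theorem exists_nonnull (B : LinearMap.BilinForm ℝ V) (hsymm : ∀ x y, B x y = B y x)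
    (U : Submodule ℝ V) (hU : U ≠ ⊥) (hnd : IsNondegOn B U) : ∃ e ∈ U, B e e ≠ 0 := by
  by_contra hcon
  push Not at hcon
  apply hU
  rw [eq_bot_iff]
  intro x hx
  refine hnd x hx fun y hy => ?_
  have h := hcon (x + y) (U.add_mem hx hy)
  simp only [map_add, LinearMap.add_apply, hcon x hx, hcon y hy, hsymm y x] at h
  linarith

theorem sym_skew_zero {S : Submodule ℝ V} (f : V → V → V → ℝ)
    (h1 : ∀ a ∈ S, ∀ b ∈ S, ∀ c ∈ S, f a b c = f b a c)
    (h2 : ∀ a ∈ S, ∀ b ∈ S, ∀ c ∈ S, f a b c = - f a c b) :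
    ∀ a ∈ S, ∀ b ∈ S, ∀ c ∈ S, f a b c = 0 := by
  intro a ha b hb c hc
  linarith [h1 a ha b hb c hc, h2 b hb a ha c hc, h1 b hb c hc a ha, h2 c hc b hb a ha,
    h1 c hc a ha b hb, h2 a ha c hc b hb]

theorem curv_kill (V₁ V₂ : Submodule ℝ V) (hcompl : IsCompl V₁ V₂)
    (R : V →ₗ[ℝ] V →ₗ[ℝ] Module.End ℝ V)
    (hp1 : ∀ x y, ∀ u ∈ V₁, R x y u ∈ V₁) (hp2 : ∀ x y, ∀ u ∈ V₂, R x y u ∈ V₂)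
    (hb : ∀ x y z, R x y z + R y z x + R z x y = 0) :
    ∀ x ∈ V₁, ∀ y ∈ V₁, ∀ z ∈ V₂, R x y z = 0 := by
  intro x hx y hy z hz
  have h : R x y z = - (R y z x + R z x y) := by
    have := hb x y z
    rw [add_assoc] at this
    exact eq_neg_of_add_eq_zero_left this
  have m1 : R x y z ∈ V₁ := by
    rw [h]
    exact V₁.neg_mem (V₁.add_mem (hp1 _ _ _ hx) (hp1 _ _ _ hy))
  exact Submodule.disjoint_def.1 hcompl.disjoint _ m1 (hp2 _ _ _ hz)

theorem curv_mixed (B : LinearMap.BilinForm ℝ V) (hsymm : ∀ x y, B x y = B y x)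
    (V₁ V₂ : Submodule ℝ V) (hcompl : IsCompl V₁ V₂)
    (R : V →ₗ[ℝ] V →ₗ[ℝ] Module.End ℝ V) (c : V → V → ℝ)
    (ha : ∀ x y, R x y = - R y x)
    (hp1 : ∀ x y, ∀ u ∈ V₁, R x y u ∈ V₁) (hp2 : ∀ x y, ∀ u ∈ V₂, R x y u ∈ V₂)
    (hb : ∀ x y z, R x y z + R y z x + R z x y = 0)
    (hc : ∀ x y u w, B (R x y u) w + B u (R x y w) = 2 * c x y * B u w)
    (z : V) (hz : z ∈ V₂) :
    ∀ x ∈ V₁, ∀ y ∈ V₁, ∀ w ∈ V₁,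
      B (R x z y) w = c x z * B y w + c y z * B x w - c w z * B x y := by
  have key := sym_skew_zero (S := V₁)
    (fun x y w => B (R x z y) w - (c x z * B y w + c y z * B x w - c w z * B x y)) ?_ ?_
  · intro x hx y hy w hw
    have := key x hx y hy w hw
    linarith
  · intro x hx y hy w hw
    have h0 := curv_kill V₁ V₂ hcompl R hp1 hp2 hb x hx y hy z hz
    have h1 := hb x y z
    rw [h0, ha z x, LinearMap.neg_apply, zero_add, ← sub_eq_add_neg, sub_eq_zero] at h1
    simp only [h1, hsymm x y]
    ring
  · intro x hx y hy w hw
    have := hc x z y w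
    rw [hsymm y (R x z w)] at this
    simp only [hsymm w y]
    linarith

/-- The conformal algebra of the statement. -/
def gSet (B : LinearMap.BilinForm ℝ V) (V₁ V₂ : Submodule ℝ V) : Set (Module.End ℝ V) :=
  {F | ∃ c : ℝ, ∃ A₁ ∈ soPart B V₁ V₂, ∃ A₂ ∈ soPart B V₂ V₁,
          F = c • (1 : Module.End ℝ V) + A₁ + A₂}

theorem soPart_add {B : LinearMap.BilinForm ℝ V} {V₁ V₂ : Submodule ℝ V} {A A' : Module.End ℝ V}
    (h : A ∈ soPart B V₁ V₂) (h' : A' ∈ soPart B V₁ V₂) : A + A' ∈ soPart B V₁ V₂ := by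
  refine ⟨fun x y => ?_, fun x hx => V₁.add_mem (h.2.1 x hx) (h'.2.1 x hx), fun y hy => ?_⟩
  · have h1 := h.1 x y
    have h2 := h'.1 x y
    simp only [LinearMap.add_apply, map_add]
    linarith
  · simp [h.2.2 y hy, h'.2.2 y hy]

theorem soPart_neg {B : LinearMap.BilinForm ℝ V} {V₁ V₂ : Submodule ℝ V} {A : Module.End ℝ V}
    (h : A ∈ soPart B V₁ V₂) : -A ∈ soPart B V₁ V₂ := by
  refine ⟨fun x y => ?_, fun x hx => V₁.neg_mem (h.2.1 x hx), fun y hy => ?_⟩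
  · have h1 := h.1 x y
    simp only [LinearMap.neg_apply, map_neg]
    linarith
  · simp [h.2.2 y hy]

theorem soPart_zero {B : LinearMap.BilinForm ℝ V} {V₁ V₂ : Submodule ℝ V} :
    (0 : Module.End ℝ V) ∈ soPart B V₁ V₂ := by
  refine ⟨fun x y => ?_, fun x hx => ?_, fun y hy => ?_⟩ <;> simp

theorem soPart_wedge {B : LinearMap.BilinForm ℝ V} (hsymm : ∀ x y, B x y = B y x)
    {V₁ V₂ : Submodule ℝ V}
    (horth : ∀ x ∈ V₁, ∀ y ∈ V₂, B x y = 0) {a b : V} (ha : a ∈ V₁) (hb : b ∈ V₁) :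
    wedge B a b ∈ soPart B V₁ V₂ := by
  refine ⟨fun x y => ?_, fun x hx => ?_, fun y hy => ?_⟩
  · simp only [wedge, LinearMap.coe_mk, AddHom.coe_mk, map_sub, map_smul, LinearMap.sub_apply,
      LinearMap.smul_apply, smul_eq_mul]
    rw [hsymm x b, hsymm x a]
    ring
  · exact V₁.sub_mem (V₁.smul_mem _ hb) (V₁.smul_mem _ ha)
  · simp [wedge, horth a ha y hy, horth b hb y hy]

theorem gSet_add {B : LinearMap.BilinForm ℝ V} {V₁ V₂ : Submodule ℝ V} {A A' : Module.End ℝ V}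
    (h : A ∈ gSet B V₁ V₂) (h' : A' ∈ gSet B V₁ V₂) : A + A' ∈ gSet B V₁ V₂ := by
  obtain ⟨c, A₁, h1, A₂, h2, rfl⟩ := h
  obtain ⟨c', A₁', h1', A₂', h2', rfl⟩ := h'
  exact ⟨c + c', _, soPart_add h1 h1', _, soPart_add h2 h2', by module⟩

theorem gSet_neg {B : LinearMap.BilinForm ℝ V} {V₁ V₂ : Submodule ℝ V} {A : Module.End ℝ V}
    (h : A ∈ gSet B V₁ V₂) : -A ∈ gSet B V₁ V₂ := by
  obtain ⟨c, A₁, h1, A₂, h2, rfl⟩ := h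
  exact ⟨-c, _, soPart_neg h1, _, soPart_neg h2, by module⟩

theorem gSet_pres {B : LinearMap.BilinForm ℝ V} {V₁ V₂ : Submodule ℝ V} {F : Module.End ℝ V}
    (h : F ∈ gSet B V₁ V₂) : (∀ u ∈ V₁, F u ∈ V₁) ∧ (∀ u ∈ V₂, F u ∈ V₂) ∧
      ∃ c : ℝ, ∀ u w, B (F u) w + B u (F w) = 2 * c * B u w := by
  obtain ⟨c, A₁, h1, A₂, h2, rfl⟩ := h
  refine ⟨fun u hu => ?_, fun u hu => ?_, c, fun u w => ?_⟩
  · simp only [LinearMap.add_apply, LinearMap.smul_apply, Module.End.one_apply, h2.2.2 u hu,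
      add_zero]
    exact V₁.add_mem (V₁.smul_mem _ hu) (h1.2.1 u hu)
  · simp only [LinearMap.add_apply, LinearMap.smul_apply, Module.End.one_apply, h1.2.2 u hu,
      add_zero]
    exact V₂.add_mem (V₂.smul_mem _ hu) (h2.2.1 u hu)
  · have e1 := h1.1 u w
    have e2 := h2.1 u w
    simp only [LinearMap.add_apply, LinearMap.smul_apply, Module.End.one_apply, map_add, map_smul,
      smul_eq_mul]
    linarith

theorem exists_proj (V₁ V₂ : Submodule ℝ V) (hcompl : IsCompl V₁ V₂) :
    ∃ P₁ P₂ : Module.End ℝ V, (∀ x, P₁ x ∈ V₁) ∧ (∀ x, P₂ x ∈ V₂) ∧ (∀ x, P₁ x + P₂ x = x) ∧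
      (∀ x ∈ V₁, P₁ x = x) ∧ (∀ x ∈ V₂, P₁ x = 0) ∧ (∀ x ∈ V₂, P₂ x = x) ∧
      (∀ x ∈ V₁, P₂ x = 0) := by
  have hd := Submodule.disjoint_def.1 hcompl.disjoint
  have hs : ∀ x : V, ∃ a ∈ V₁, ∃ b ∈ V₂, a + b = x := fun x =>
    Submodule.mem_sup.1 (by rw [hcompl.sup_eq_top]; trivial)
  have hu : ∀ a ∈ V₁, ∀ b ∈ V₂, ∀ a' ∈ V₁, ∀ b' ∈ V₂, a + b = a' + b' → a = a' := by
    intro a ha b hb a' ha' b' hb' h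
    have e : a - a' = b' - b := by
      rw [sub_eq_sub_iff_add_eq_add, h, add_comm]
    exact sub_eq_zero.1 (hd _ (V₁.sub_mem ha ha') (e ▸ V₂.sub_mem hb' hb))
  choose p hp q hq hpq using hs
  let P : Module.End ℝ V :=
    { toFun := p
      map_add' := fun x y => hu _ (hp _) _ (hq _) _ (V₁.add_mem (hp _) (hp _)) _
        (V₂.add_mem (hq x) (hq y)) (by
          rw [hpq, add_add_add_comm, hpq, hpq])
      map_smul' := fun t x => hu _ (hp _) _ (hq _) _ (V₁.smul_mem _ (hp _)) _
        (V₂.smul_mem t (hq x)) (by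
          rw [hpq, RingHom.id_apply, ← smul_add, hpq]) }
  have hP1 : ∀ x ∈ V₁, P x = x := fun x hx =>
    hu _ (hp x) _ (hq x) _ hx 0 V₂.zero_mem (by rw [hpq, add_zero])
  have hP2 : ∀ x ∈ V₂, P x = 0 := fun x hx =>
    hu _ (hp x) _ (hq x) _ V₁.zero_mem x hx (by rw [hpq, zero_add])
  have hq' : ∀ x, (1 - P) x = q x := fun x => by
    change x - p x = q x
    exact sub_eq_of_eq_add' (hpq x).symm
  refine ⟨P, 1 - P, hp, fun x => by rw [hq']; exact hq x, fun x => by simp, hP1, hP2,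
    fun x hx => by simp [hP2 x hx], fun x hx => by simp [hP1 x hx]⟩

theorem decomp_mem {B : LinearMap.BilinForm ℝ V}
    (hsymm : ∀ x y, B x y = B y x)
    {V₁ V₂ : Submodule ℝ V}
    (horth : ∀ x ∈ V₁, ∀ y ∈ V₂, B x y = 0) {Z W : Module.End ℝ V}
    (hZ : ∀ y ∈ V₂, Z y ∈ V₁) (hW : ∀ x ∈ V₁, W x ∈ V₂) {x y : V} (hx : x ∈ V₁) (hy : y ∈ V₂) :
    wedge B (Z y) x + wedge B (W x) y + (B (Z y) x) • (1 : Module.End ℝ V) ∈ gSet B V₁ V₂ :=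
  ⟨B (Z y) x, _, soPart_wedge hsymm horth (hZ y hy) hx, _,
    soPart_wedge hsymm (fun a ha b hb => by rw [hsymm]; exact horth b hb a ha) (hW x hx) hy,
    by abel⟩

theorem curv_of_decomp {B : LinearMap.BilinForm ℝ V}
    (hsymm : ∀ x y, B x y = B y x)
    {V₁ V₂ : Submodule ℝ V} (hcompl : IsCompl V₁ V₂)
    (horth : ∀ x ∈ V₁, ∀ y ∈ V₂, B x y = 0)
    {R R₁ R₂ : V →ₗ[ℝ] V →ₗ[ℝ] Module.End ℝ V} {Z W : Module.End ℝ V}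
    (h : Decomp B V₁ V₂ R R₁ R₂ Z W) : IsCurv (gSet B V₁ V₂) R := by
  obtain ⟨hR1, hR1z, hR2, hR2z, hZ, hZ0, hW, hW0, hZW, ha, h11, h22, h12⟩ := h
  obtain ⟨P₁, P₂, hP1, hP2, hP, -, -, -, -⟩ := exists_proj V₁ V₂ hcompl
  have horth' : ∀ x ∈ V₂, ∀ y ∈ V₁, B x y = 0 := fun a ha b hb => by
    rw [hsymm]; exact horth b hb a ha
  have h11' : ∀ x ∈ V₁, ∀ y ∈ V₁, R x y = R₁ x y := fun x hx y hy => by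
    rw [h11 x hx y hy, hR2z x y (Or.inl hx), add_zero]
  have h22' : ∀ x ∈ V₂, ∀ y ∈ V₂, R x y = R₂ x y := fun x hx y hy => by
    rw [h22 x hx y hy, hR1z x y (Or.inl hx), zero_add]
  have h12' : ∀ x ∈ V₁, ∀ y ∈ V₂, R x y =
      wedge B (Z y) x + wedge B (W x) y + (B (Z y) x) • (1 : Module.End ℝ V) :=
    fun x hx y hy => by
      rw [h12 x hx y hy, hR1z x y (Or.inr hy), hR2z x y (Or.inl hx)]; abel
  have J111 : ∀ x ∈ V₁, ∀ y ∈ V₁, ∀ z ∈ V₁, R x y z + R y z x + R z x y = 0 := by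
    intro x hx y hy z hz
    rw [h11' x hx y hy, h11' y hy z hz, h11' z hz x hx]
    exact hR1.2.2 x y z
  have J222 : ∀ x ∈ V₂, ∀ y ∈ V₂, ∀ z ∈ V₂, R x y z + R y z x + R z x y = 0 := by
    intro x hx y hy z hz
    rw [h22' x hx y hy, h22' y hy z hz, h22' z hz x hx]
    exact hR2.2.2 x y z
  have J112 : ∀ x ∈ V₁, ∀ y ∈ V₁, ∀ z ∈ V₂, R x y z + R y z x + R z x y = 0 := by
    intro x hx y hy z hz
    rw [ha z x, h11' x hx y hy, h12' y hy z hz, h12' x hx z hz, (hR1.2.1 x y).2.2 z hz]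
    simp only [wedge, LinearMap.add_apply, LinearMap.neg_apply, LinearMap.coe_mk, AddHom.coe_mk,
      LinearMap.smul_apply, Module.End.one_apply, horth' z hz x hx, horth' z hz y hy,
      horth' _ (hW x hx) y hy, horth' _ (hW y hy) x hx, hsymm y x]
    module
  have J221 : ∀ x ∈ V₂, ∀ y ∈ V₂, ∀ z ∈ V₁, R x y z + R y z x + R z x y = 0 := by
    intro x hx y hy z hz
    rw [ha y z, h22' x hx y hy, h12' z hz x hx, h12' z hz y hy, (hR2.2.1 x y).2.2 z hz]
    simp only [wedge, LinearMap.add_apply, LinearMap.neg_apply, LinearMap.coe_mk, AddHom.coe_mk,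
      LinearMap.smul_apply, Module.End.one_apply, horth z hz x hx, horth z hz y hy,
      horth _ (hZ x hx) y hy, horth _ (hZ y hy) x hx, hsymm y x, hZW x z, hZW y z, hsymm (W z)]
    module
  refine ⟨ha, fun x y => ?_, fun x y z => ?_⟩
  · have e : R x y = R (P₁ x) (P₁ y) + R (P₂ x) (P₂ y) + R (P₁ x) (P₂ y) + - R (P₁ y) (P₂ x) := by
      conv_lhs => rw [← hP x, ← hP y]
      simp only [map_add, LinearMap.add_apply]
      rw [ha (P₂ x) (P₁ y)]
      abel
    rw [e]
    refine gSet_add (gSet_add (gSet_add ?_ ?_) ?_) (gSet_neg ?_)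
    · rw [h11' _ (hP1 x) _ (hP1 y)]
      exact ⟨0, _, hR1.2.1 (P₁ x) (P₁ y), 0, soPart_zero, by simp⟩
    · rw [h22' _ (hP2 x) _ (hP2 y)]
      exact ⟨0, 0, soPart_zero, _, hR2.2.1 (P₂ x) (P₂ y), by simp⟩
    · rw [h12' _ (hP1 x) _ (hP2 y)]
      exact decomp_mem hsymm horth hZ hW (hP1 x) (hP2 y)
    · rw [h12' _ (hP1 y) _ (hP2 x)]
      exact decomp_mem hsymm horth hZ hW (hP1 y) (hP2 x)
  · have e1 := J111 _ (hP1 x) _ (hP1 y) _ (hP1 z)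
    have e2 := J112 _ (hP1 x) _ (hP1 y) _ (hP2 z)
    have e3 := J112 _ (hP1 y) _ (hP1 z) _ (hP2 x)
    have e4 := J112 _ (hP1 z) _ (hP1 x) _ (hP2 y)
    have e5 := J221 _ (hP2 x) _ (hP2 y) _ (hP1 z)
    have e6 := J221 _ (hP2 y) _ (hP2 z) _ (hP1 x)
    have e7 := J221 _ (hP2 z) _ (hP2 x) _ (hP1 y)
    have e8 := J222 _ (hP2 x) _ (hP2 y) _ (hP2 z)
    rw [← hP x, ← hP y, ← hP z]
    generalize P₁ x = x1 at *
    generalize P₁ y = y1 at *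
    generalize P₁ z = z1 at *
    generalize P₂ x = x2 at *
    generalize P₂ y = y2 at *
    generalize P₂ z = z2 at *
    simp only [map_add, LinearMap.add_apply]
    linear_combination (norm := module) e1 + e2 + e3 + e4 + e5 + e6 + e7 + e8

theorem decomp_unique {B : LinearMap.BilinForm ℝ V}
    (hsymm : ∀ x y, B x y = B y x) (hnd : ∀ x, (∀ y, B x y = 0) → x = 0)
    {V₁ V₂ : Submodule ℝ V} (hcompl : IsCompl V₁ V₂)
    (horth : ∀ x ∈ V₁, ∀ y ∈ V₂, B x y = 0) (h1 : V₁ ≠ ⊥) (hnd1 : IsNondegOn B V₁)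
    {R R₁ R₂ R₁' R₂' : V →ₗ[ℝ] V →ₗ[ℝ] Module.End ℝ V} {Z W Z' W' : Module.End ℝ V}
    (h : Decomp B V₁ V₂ R R₁ R₂ Z W) (h' : Decomp B V₁ V₂ R R₁' R₂' Z' W') :
    R₁ = R₁' ∧ R₂ = R₂' ∧ Z = Z' := by
  obtain ⟨hR1, hR1z, hR2, hR2z, hZ, hZ0, hW, hW0, hZW, ha, h11, h22, h12⟩ := h
  obtain ⟨hR1', hR1z', hR2', hR2z', hZ', hZ0', hW', hW0', hZW', ha', h11', h22', h12'⟩ := h'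
  obtain ⟨P₁, P₂, hP1, hP2, hP, -, -, -, -⟩ := exists_proj V₁ V₂ hcompl
  refine ⟨?_, ?_, ?_⟩
  · refine LinearMap.ext fun x => LinearMap.ext fun y => ?_
    rw [← hP x, ← hP y]
    have e := h11' _ (hP1 x) _ (hP1 y)
    rw [h11 _ (hP1 x) _ (hP1 y), hR2z _ _ (Or.inl (hP1 x)), hR2z' _ _ (Or.inl (hP1 x)),
      add_zero, add_zero] at e
    simp only [map_add, LinearMap.add_apply, e, hR1z _ _ (Or.inl (hP2 x)),
      hR1z _ _ (Or.inr (hP2 y)), hR1z' _ _ (Or.inl (hP2 x)), hR1z' _ _ (Or.inr (hP2 y))]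
  · refine LinearMap.ext fun x => LinearMap.ext fun y => ?_
    rw [← hP x, ← hP y]
    have e := h22' _ (hP2 x) _ (hP2 y)
    rw [h22 _ (hP2 x) _ (hP2 y), hR1z _ _ (Or.inl (hP2 x)), hR1z' _ _ (Or.inl (hP2 x)),
      zero_add, zero_add] at e
    simp only [map_add, LinearMap.add_apply, e, hR2z _ _ (Or.inl (hP1 x)),
      hR2z _ _ (Or.inr (hP1 y)), hR2z' _ _ (Or.inl (hP1 x)), hR2z' _ _ (Or.inr (hP1 y))]
  · obtain ⟨e, he, hee⟩ := exists_nonnull B hsymm V₁ h1 hnd1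
    have key : ∀ x ∈ V₁, ∀ y ∈ V₂, B (Z y) x = B (Z' y) x := by
      intro x hx y hy
      have q := h12' x hx y hy
      rw [h12 x hx y hy, hR1z _ _ (Or.inr hy), hR1z' _ _ (Or.inr hy), hR2z _ _ (Or.inl hx),
        hR2z' _ _ (Or.inl hx)] at q
      have q2 := congrArg (fun F : Module.End ℝ V => B (F e) e) q
      simp only [wedge, LinearMap.add_apply, LinearMap.coe_mk, AddHom.coe_mk, LinearMap.smul_apply,
        Module.End.one_apply, map_add, map_sub, map_smul, LinearMap.sub_apply, smul_eq_mul,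
        LinearMap.zero_apply, map_zero] at q2
      apply mul_right_cancel₀ hee
      linear_combination q2
    refine LinearMap.ext fun y => sub_eq_zero.1 (hnd _ fun x => ?_)
    rw [← hP x, ← hP y]
    have m : Z (P₂ y) - Z' (P₂ y) ∈ V₁ := V₁.sub_mem (hZ _ (hP2 y)) (hZ' _ (hP2 y))
    have k := key _ (hP1 x) _ (hP2 y)
    rw [map_add Z, map_add Z', hZ0 _ (hP1 y), hZ0' _ (hP1 y), zero_add, zero_add,
      map_add (B (Z (P₂ y) - Z' (P₂ y))), horth _ m _ (hP2 x), map_sub, LinearMap.sub_apply, k]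
    simp

theorem decomp_of_curv [FiniteDimensional ℝ V] {B : LinearMap.BilinForm ℝ V}
    (hsymm : ∀ x y, B x y = B y x) (hnd : ∀ x, (∀ y, B x y = 0) → x = 0)
    {V₁ V₂ : Submodule ℝ V} (hcompl : IsCompl V₁ V₂)
    (horth : ∀ x ∈ V₁, ∀ y ∈ V₂, B x y = 0)
    (h1 : V₁ ≠ ⊥) (h2 : V₂ ≠ ⊥)
    (hnd1 : IsNondegOn B V₁) (hnd2 : IsNondegOn B V₂)
    {R : V →ₗ[ℝ] V →ₗ[ℝ] Module.End ℝ V} (hR : IsCurv (gSet B V₁ V₂) R) :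
    ∃ R₁ R₂ Z W, Decomp B V₁ V₂ R R₁ R₂ Z W := by
  obtain ⟨ha, hg, hb⟩ := hR
  have horth' : ∀ x ∈ V₂, ∀ y ∈ V₁, B x y = 0 := fun a ha b hb => by
    rw [hsymm]; exact horth b hb a ha
  obtain ⟨P₁, P₂, hP1, hP2, hP, hP11, hP12, hP22, hP21⟩ := exists_proj V₁ V₂ hcompl
  obtain ⟨e, he, hee⟩ := exists_nonnull B hsymm V₁ h1 hnd1
  obtain ⟨e2, he2, hee2⟩ := exists_nonnull B hsymm V₂ h2 hnd2
  have hp1 : ∀ x y, ∀ u ∈ V₁, R x y u ∈ V₁ := fun x y => (gSet_pres (hg x y)).1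
  have hp2 : ∀ x y, ∀ u ∈ V₂, R x y u ∈ V₂ := fun x y => (gSet_pres (hg x y)).2.1
  let cf : Module.End ℝ V →ₗ[ℝ] ℝ := (B e e)⁻¹ • ((B e).comp (LinearMap.applyₗ e))
  have hcf : ∀ F, cf F = (B e e)⁻¹ * B e (F e) := fun F => rfl
  let C : V →ₗ[ℝ] V →ₗ[ℝ] ℝ := R.compr₂ cf
  have hC : ∀ x y, C x y = cf (R x y) := fun x y => rfl
  have hc : ∀ x y u w, B (R x y u) w + B u (R x y w) = 2 * C x y * B u w := by
    intro x y
    obtain ⟨c, hc⟩ := (gSet_pres (hg x y)).2.2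
    have : C x y = c := by
      rw [hC, hcf]
      have := hc e e
      rw [hsymm (R x y e) e] at this
      field_simp
      linarith
    rw [this]
    exact hc
  have hCa : ∀ x y, C x y = - C y x := fun x y => by rw [hC, hC, ha x y, map_neg]
  have k1 := curv_kill V₁ V₂ hcompl R hp1 hp2 hb
  have k2 := curv_kill V₂ V₁ hcompl.symm R hp2 hp1 hb
  have m1 := curv_mixed B hsymm V₁ V₂ hcompl R (fun x y => C x y) ha hp1 hp2 hb hc
  have m2 := curv_mixed B hsymm V₂ V₁ hcompl.symm R (fun x y => C x y) ha hp2 hp1 hb hc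
  have s1 : ∀ x ∈ V₁, ∀ y ∈ V₁, R x y ∈ soPart B V₁ V₂ := by
    intro x hx y hy
    refine ⟨fun u w => ?_, hp1 x y, k1 x hx y hy⟩
    have := hc x y e2 e2
    rw [k1 x hx y hy e2 he2] at this
    have h0 : C x y = 0 := by simpa [hee2] using this
    rw [hc, h0]; ring
  have s2 : ∀ x ∈ V₂, ∀ y ∈ V₂, R x y ∈ soPart B V₂ V₁ := by
    intro x hx y hy
    refine ⟨fun u w => ?_, hp2 x y, k2 x hx y hy⟩
    have := hc x y e e
    rw [k2 x hx y hy e he] at this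
    have h0 : C x y = 0 := by simpa [hee] using this
    rw [hc, h0]; ring
  have hBn : B.Nondegenerate := ⟨hnd, fun y hy => hnd y fun x => by rw [hsymm]; exact hy x⟩
  let T := B.toDual hBn
  have hT : ∀ f x, B (T.symm f) x = f x := fun f x => LinearMap.BilinForm.apply_toDual_symm_apply _ _
  let D : V →ₗ[ℝ] V →ₗ[ℝ] ℝ := C.compl₁₂ P₁ P₂
  have hD : ∀ x y, D x y = C (P₁ x) (P₂ y) := fun x y => rfl
  let Z : Module.End ℝ V := T.symm.toLinearMap ∘ₗ D.flip
  let W : Module.End ℝ V := T.symm.toLinearMap ∘ₗ D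
  have hZ : ∀ y x, B (Z y) x = C (P₁ x) (P₂ y) := fun y x => hT _ _
  have hW : ∀ x y, B (W x) y = C (P₁ x) (P₂ y) := fun x y => hT _ _
  have mem1 : ∀ v, (∀ w ∈ V₂, B v w = 0) → v ∈ V₁ := by
    intro v hv
    have : P₂ v = 0 := hnd2 _ (hP2 v) fun w hw => by
      have := hv w hw
      rw [← hP v, map_add, LinearMap.add_apply, horth _ (hP1 v) w hw, zero_add] at this
      exact this
    rw [← hP v, this, add_zero]; exact hP1 v
  have mem2 : ∀ v, (∀ w ∈ V₁, B v w = 0) → v ∈ V₂ := by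
    intro v hv
    have : P₁ v = 0 := hnd1 _ (hP1 v) fun w hw => by
      have := hv w hw
      rw [← hP v, map_add, LinearMap.add_apply, horth' _ (hP2 v) w hw, add_zero] at this
      exact this
    rw [← hP v, this, zero_add]; exact hP2 v
  have hZm : ∀ y, Z y ∈ V₁ := fun y => mem1 _ fun w hw => by rw [hZ, hP12 w hw]; simp
  have hWm : ∀ y, W y ∈ V₂ := fun y => mem2 _ fun w hw => by rw [hW, hP21 w hw]; simp
  refine ⟨R.compl₁₂ P₁ P₁, R.compl₁₂ P₂ P₂, Z, W, ⟨?_, ?_, ?_⟩, ?_, ⟨?_, ?_, ?_⟩, ?_,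
    fun y _ => hZm y, ?_, fun x _ => hWm x, ?_, ?_, ha, ?_, ?_, ?_⟩
  · intro x y; exact ha _ _
  · intro x y; exact s1 _ (hP1 x) _ (hP1 y)
  · intro x y z
    have q : ∀ a b c, R (P₁ a) (P₁ b) c = R (P₁ a) (P₁ b) (P₁ c) := fun a b c => by
      conv_lhs => rw [← hP c, map_add, k1 _ (hP1 a) _ (hP1 b) _ (hP2 c), add_zero]
    simp only [LinearMap.compl₁₂_apply]
    rw [q x, q y, q z]
    exact hb _ _ _
  · rintro x y (h | h) <;> simp [hP12 _ h]
  · intro x y; exact ha _ _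
  · intro x y; exact s2 _ (hP2 x) _ (hP2 y)
  · intro x y z
    have q : ∀ a b c, R (P₂ a) (P₂ b) c = R (P₂ a) (P₂ b) (P₂ c) := fun a b c => by
      conv_lhs => rw [← hP c, map_add, k2 _ (hP2 a) _ (hP2 b) _ (hP1 c), zero_add]
    simp only [LinearMap.compl₁₂_apply]
    rw [q x, q y, q z]
    exact hb _ _ _
  · rintro x y (h | h) <;> simp [hP21 _ h]
  · intro x hx
    exact hnd _ fun w => by rw [hZ, hP21 x hx]; simp
  · intro x hx
    exact hnd _ fun w => by rw [hW, hP12 x hx]; simp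
  · intro x y
    rw [hZ, hsymm, hW]
  · intro x hx y hy
    simp [hP11 x hx, hP11 y hy, hP21 x hx]
  · intro x hx y hy
    simp [hP22 x hx, hP22 y hy, hP12 x hx]
  · intro x hx y hy
    have z1 : R.compl₁₂ P₁ P₁ x y = 0 := by simp [hP12 y hy]
    have z2 : R.compl₁₂ P₂ P₂ x y = 0 := by simp [hP21 x hx]
    rw [z1, z2, add_zero, zero_add]
    have hZ' : ∀ w ∈ V₁, B (Z y) w = C w y := fun w hw => by rw [hZ, hP11 w hw, hP22 y hy]
    have hW' : ∀ w ∈ V₂, B (W x) w = C x w := fun w hw => by rw [hW, hP11 x hx, hP22 w hw]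
    have c1 : ∀ u ∈ V₁, R x y u =
        C u y • x - B x u • Z y + C x y • u := by
      intro u hu
      refine sub_eq_zero.1 (hnd1 _ ?_ fun w hw => ?_)
      · exact V₁.sub_mem (hp1 _ _ _ hu) (V₁.add_mem (V₁.sub_mem (V₁.smul_mem _ hx)
          (V₁.smul_mem _ (hZm y))) (V₁.smul_mem _ hu))
      · simp only [map_sub, map_add, map_smul, LinearMap.sub_apply, LinearMap.add_apply,
          LinearMap.smul_apply, smul_eq_mul, hZ' w hw, m1 y hy x hx u hu w hw]
        ring
    have c2 : ∀ u ∈ V₂, R x y u =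
        C x u • y - B y u • W x + C x y • u := by
      intro u hu
      refine sub_eq_zero.1 (hnd2 _ ?_ fun w hw => ?_)
      · exact V₂.sub_mem (hp2 _ _ _ hu) (V₂.add_mem (V₂.sub_mem (V₂.smul_mem _ hy)
          (V₂.smul_mem _ (hWm x))) (V₂.smul_mem _ hu))
      · have := m2 x hx y hy u hu w hw
        rw [ha x y]
        simp only [map_sub, map_add, map_smul, LinearMap.sub_apply, LinearMap.add_apply,
          LinearMap.smul_apply, smul_eq_mul, hW' w hw, LinearMap.neg_apply, map_neg, this]
        rw [hCa y x, hCa u x, hCa w x]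
        ring
    refine LinearMap.ext fun u => ?_
    rw [← hP u, map_add, map_add, c1 _ (hP1 u), c2 _ (hP2 u)]
    simp only [wedge, LinearMap.add_apply, LinearMap.coe_mk, AddHom.coe_mk, LinearMap.smul_apply,
        Module.End.one_apply]
    rw [hZ' _ hx, hZ' _ (hP1 u), hW' _ (hP2 u), horth' _ (hWm x) _ (hP1 u),
      horth _ (hZm y) _ (hP2 u), horth _ hx _ (hP2 u), horth' _ hy _ (hP1 u)]
    module

/-- Let `V = V₁ ⊕ V₂` be a nontrivial orthogonal decomposition of a
pseudo-Euclidean space.  A map `R` is an algebraic curvature tensor of type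
`so(V₁) ⊕ so(V₂) ⊕ ℝ·id` if and only if it decomposes as `R₁ + R₂ + R₃` as
above, and the data `(R₁, R₂, Z)` is unique; hence
`ℛ(so(V₁) ⊕ so(V₂) ⊕ ℝ·id) ≅ ℛ(so(V₁)) ⊕ ℛ(so(V₂)) ⊕ V₁⊗V₂`. -/
theorem curvature_conformal_sum_decomposition
    [FiniteDimensional ℝ V] (B : LinearMap.BilinForm ℝ V)
    (hsymm : ∀ x y, B x y = B y x) (hnd : ∀ x, (∀ y, B x y = 0) → x = 0)
    (V₁ V₂ : Submodule ℝ V) (hcompl : IsCompl V₁ V₂)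
    (horth : ∀ x ∈ V₁, ∀ y ∈ V₂, B x y = 0)
    (h1 : V₁ ≠ ⊥) (h2 : V₂ ≠ ⊥)
    (hnd1 : IsNondegOn B V₁) (hnd2 : IsNondegOn B V₂)
    (R : V →ₗ[ℝ] V →ₗ[ℝ] Module.End ℝ V) :
    (IsCurv
        {F | ∃ c : ℝ, ∃ A₁ ∈ soPart B V₁ V₂, ∃ A₂ ∈ soPart B V₂ V₁,
          F = c • (1 : Module.End ℝ V) + A₁ + A₂} R ↔
      ∃ R₁ R₂ Z W, Decomp B V₁ V₂ R R₁ R₂ Z W) ∧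
    (∀ R₁ R₂ Z W R₁' R₂' Z' W',
      Decomp B V₁ V₂ R R₁ R₂ Z W → Decomp B V₁ V₂ R R₁' R₂' Z' W' →
      R₁ = R₁' ∧ R₂ = R₂' ∧ Z = Z') := by
  exact ⟨⟨fun h => decomp_of_curv hsymm hnd hcompl horth h1 h2 hnd1 hnd2 h,
    fun ⟨R₁, R₂, Z, W, h⟩ => curv_of_decomp hsymm hcompl horth h⟩,
    fun R₁ R₂ Z W R₁' R₂' Z' W' h h' =>
      decomp_unique hsymm hnd hcompl horth h1 hnd1 h h'⟩

end Weyl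
end
end

section
/- Let V be a pseudo-Euclidean space with an orthogonal decomposition V = V₁ ⊕ V₂ ⊕ V₃ into three nonzero nondegenerate subspaces. Then ℛ(so(V₁) ⊕ so(V₂) ⊕ so(V₃) ⊕ ℝ·id_V) = ℛ(so(V₁)) ⊕ ℛ(so(V₂)) ⊕ ℛ(so(V₃)) (each summand extended by zero on bivectors involving the other subspaces); in particular, for arbitrary subalgebras 𝔥ᵢ ⊆ so(Vᵢ), i = 1,2,3, the algebra 𝔥₁ ⊕ 𝔥₂ ⊕ 𝔥₃ ⊕ ℝ·id_V ⊆ co(V) is not a Berger algebra. -/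
open Module

noncomputable section

namespace Weyl

variable {V : Type*} [AddCommGroup V] [Module ℝ V]

/-- Working hypotheses, symmetric under permutations of the three summands. -/
structure Dat (B : LinearMap.BilinForm ℝ V) (V₁ V₂ V₃ : Submodule ℝ V)
    (R : V →ₗ[ℝ] V →ₗ[ℝ] Module.End ℝ V) : Prop where
  hsymm : ∀ x y, B x y = B y x
  ne1 : V₁ ≠ ⊥
  ne2 : V₂ ≠ ⊥
  ne3 : V₃ ≠ ⊥
  nd1 : IsNondegOn B V₁
  nd2 : IsNondegOn B V₂
  nd3 : IsNondegOn B V₃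
  ind1 : V₁ ⊓ (V₂ ⊔ V₃) = ⊥
  ind2 : V₂ ⊓ (V₁ ⊔ V₃) = ⊥
  ind3 : V₃ ⊓ (V₁ ⊔ V₂) = ⊥
  sup : V₁ ⊔ V₂ ⊔ V₃ = ⊤
  skew : ∀ x y, R x y = - R y x
  bian : ∀ x y z, R x y z + R y z x + R z x y = 0
  pres1 : ∀ x y, ∀ z ∈ V₁, R x y z ∈ V₁
  pres2 : ∀ x y, ∀ z ∈ V₂, R x y z ∈ V₂
  pres3 : ∀ x y, ∀ z ∈ V₃, R x y z ∈ V₃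
  conf : ∀ x y, ∃ c : ℝ, ∀ z w, B (R x y z) w + B z (R x y w) = c * B z w

namespace Dat

variable {B : LinearMap.BilinForm ℝ V} {V₁ V₂ V₃ : Submodule ℝ V}
  {R : V →ₗ[ℝ] V →ₗ[ℝ] Module.End ℝ V}

theorem swap12 (h : Dat B V₁ V₂ V₃ R) : Dat B V₂ V₁ V₃ R :=
  ⟨h.hsymm, h.ne2, h.ne1, h.ne3, h.nd2, h.nd1, h.nd3, h.ind2, h.ind1,
    by rw [sup_comm V₂ V₁]; exact h.ind3, by rw [sup_comm V₂ V₁]; exact h.sup,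
    h.skew, h.bian, h.pres2, h.pres1, h.pres3, h.conf⟩

theorem swap23 (h : Dat B V₁ V₂ V₃ R) : Dat B V₁ V₃ V₂ R :=
  ⟨h.hsymm, h.ne1, h.ne3, h.ne2, h.nd1, h.nd3, h.nd2,
    by rw [sup_comm V₃ V₂]; exact h.ind1, h.ind3, h.ind2,
    by rw [sup_right_comm]; exact h.sup,
    h.skew, h.bian, h.pres1, h.pres3, h.pres2, h.conf⟩

theorem zero1 (h : Dat B V₁ V₂ V₃ R) {a b : V} (ha : a ∈ V₁) (hb : b ∈ V₂ ⊔ V₃)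
    (hab : a + b = 0) : a = 0 := by
  have : a ∈ V₁ ⊓ (V₂ ⊔ V₃) := by
    refine ⟨ha, ?_⟩
    rw [eq_neg_of_add_eq_zero_left hab]
    exact Submodule.neg_mem _ hb
  rw [h.ind1] at this
  simpa using this

theorem conf_zero (h : Dat B V₁ V₂ V₃ R) {x y : V} (hz : ∀ z ∈ V₁, R x y z = 0) :
    ∀ z w, B (R x y z) w + B z (R x y w) = 0 := by
  obtain ⟨c, hc⟩ := h.conf x y
  have hc0 : c = 0 := by
    by_contra hne
    apply h.ne1
    rw [Submodule.eq_bot_iff]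
    intro z hzm
    apply h.nd1 z hzm
    intro w hw
    have := hc z w
    rw [hz z hzm, hz w hw] at this
    simpa [hne] using this
  intro z w
  rw [hc, hc0, zero_mul]

/-- Three distinct summands. -/
theorem three (h : Dat B V₁ V₂ V₃ R) {x y z : V} (hx : x ∈ V₁) (hy : y ∈ V₂) (hz : z ∈ V₃) :
    R y z x = 0 := by
  refine h.zero1 (b := R z x y + R x y z) (h.pres1 _ _ _ hx)
    (Submodule.add_mem_sup (h.pres2 _ _ _ hy) (h.pres3 _ _ _ hz)) ?_
  rw [← add_assoc]
  exact h.bian y z x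

theorem two (h : Dat B V₁ V₂ V₃ R) {x y y' : V} (hx : x ∈ V₁) (hy : y ∈ V₂) (hy' : y' ∈ V₂) :
    R y y' x = 0 := by
  refine h.zero1 (b := R y' x y + R x y y') (h.pres1 _ _ _ hx)
    (Submodule.mem_sup_left (Submodule.add_mem _ (h.pres2 _ _ _ hy) (h.pres2 _ _ _ hy'))) ?_
  rw [← add_assoc]
  exact h.bian y y' x

theorem two' (h : Dat B V₁ V₂ V₃ R) {x y y' : V} (hx : x ∈ V₁) (hy : y ∈ V₂) (hy' : y' ∈ V₂) :
    R x y y' = R x y' y := by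
  have h1 := h.bian y y' x
  rw [h.two hx hy hy', zero_add, h.skew y' x, LinearMap.neg_apply, neg_add_eq_zero] at h1
  exact h1.symm

theorem mixed (h : Dat B V₁ V₂ V₃ R) {x y y' : V} (hx : x ∈ V₁) (hy : y ∈ V₂) (hy' : y' ∈ V₂) :
    R x y y' = 0 := by
  apply h.nd2 _ (h.pres2 _ _ _ hy')
  have hs : ∀ u ∈ V₂, ∀ z w, B (R x u z) w + B z (R x u w) = 0 := fun u hu =>
    h.swap23.swap12.conf_zero fun z hz => h.swap23.swap12.three hz hx hu
  have sk : ∀ u ∈ V₂, ∀ z w, B (R x u z) w = - B (R x u w) z := fun u hu z w => by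
    have := hs u hu z w
    rw [h.hsymm z] at this
    linarith
  intro w hw
  have e1 := sk y hy y' w
  have e2 := sk w hw y y'
  have e3 := sk y' hy' w y
  rw [h.two' hx hy hw] at e1
  rw [h.two' hx hw hy'] at e2
  rw [h.two' hx hy' hy] at e3
  linarith

theorem top (h : Dat B V₁ V₂ V₃ R) (v : V) : ∃ a ∈ V₁, ∃ b ∈ V₂, ∃ c ∈ V₃, v = a + b + c := by
  have hv : v ∈ V₁ ⊔ V₂ ⊔ V₃ := by rw [h.sup]; trivial
  obtain ⟨u, hu, c, hc, rfl⟩ := Submodule.mem_sup.1 hv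
  obtain ⟨a, ha, b, hb, rfl⟩ := Submodule.mem_sup.1 hu
  exact ⟨a, ha, b, hb, c, hc, rfl⟩

theorem cross (h : Dat B V₁ V₂ V₃ R) {x y : V} (hx : x ∈ V₁) (hy : y ∈ V₂) : R x y = 0 := by
  ext v
  obtain ⟨a, ha, b, hb, c, hc, rfl⟩ := h.top v
  have h1 : R x y a = 0 := by
    rw [h.skew, LinearMap.neg_apply, h.swap12.mixed hy hx ha, neg_zero]
  have h2 : R x y b = 0 := h.mixed hx hy hb
  have h3 : R x y c = 0 := h.swap23.swap12.three hc hx hy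
  simp [h1, h2, h3]

theorem kill (h : Dat B V₁ V₂ V₃ R) {x y z : V} (hx : x ∈ V₁) (hy : y ∈ V₁)
    (hz : z ∈ V₂ ⊔ V₃) : R x y z = 0 := by
  obtain ⟨b, hb, c, hc, rfl⟩ := Submodule.mem_sup.1 hz
  rw [map_add, h.swap12.two hb hx hy, h.swap23.swap12.two hc hx hy, add_zero]

theorem mem_so (h : Dat B V₁ V₂ V₃ R) {x y : V} (hx : x ∈ V₁) (hy : y ∈ V₁) :
    R x y ∈ soPart B V₁ (V₂ ⊔ V₃) :=
  ⟨h.swap12.conf_zero fun _ hz => h.kill hx hy (Submodule.mem_sup_left hz),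
    h.pres1 x y, fun _ hz => h.kill hx hy hz⟩

theorem exists_proj (h : Dat B V₁ V₂ V₃ R) : ∃ P : V →ₗ[ℝ] V,
    (∀ x, P x ∈ V₁) ∧ (∀ x ∈ V₁, P x = x) ∧ ∀ x ∈ V₂ ⊔ V₃, P x = 0 := by
  have hc : IsCompl V₁ (V₂ ⊔ V₃) :=
    ⟨disjoint_iff.2 h.ind1, codisjoint_iff.2 (by rw [← sup_assoc]; exact h.sup)⟩
  refine ⟨V₁.subtype ∘ₗ V₁.projectionOnto _ hc, fun x => ?_, fun x hx => ?_, fun x hx => ?_⟩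
  · simp
  · have := Submodule.projectionOnto_apply_left hc ⟨x, hx⟩
    exact congrArg Subtype.val this
  · have := Submodule.projectionOnto_apply_right hc ⟨x, hx⟩
    exact congrArg Subtype.val this

theorem part (h : Dat B V₁ V₂ V₃ R) {P : V →ₗ[ℝ] V}
    (h1 : ∀ x, P x ∈ V₁) (h2 : ∀ x ∈ V₁, P x = x) (h3 : ∀ x ∈ V₂ ⊔ V₃, P x = 0) :
    IsCurv (soPart B V₁ (V₂ ⊔ V₃)) (R.compl₁₂ P P) ∧
      ∀ x y : V, x ∈ V₂ ⊔ V₃ ∨ y ∈ V₂ ⊔ V₃ → R.compl₁₂ P P x y = 0 := by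
  refine ⟨⟨fun x y => ?_, fun x y => ?_, fun x y z => ?_⟩, ?_⟩
  · simpa using h.skew _ _
  · simpa using h.mem_so (h1 x) (h1 y)
  · have key : ∀ x y z, R (P x) (P y) z = R (P x) (P y) (P z) := fun x y z => by
      obtain ⟨a, ha, b, hb, c, hc, rfl⟩ := h.top z
      have hbc := Submodule.add_mem_sup hb hc
      rw [add_assoc, map_add, map_add P, h.kill (h1 x) (h1 y) hbc, h3 _ hbc, h2 a ha, add_zero,
        add_zero]
    simp only [LinearMap.compl₁₂_apply]
    rw [key x y z, key y z x, key z x y]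
    exact h.bian _ _ _
  · rintro x y (hx | hy)
    · simp [h3 x hx]
    · simp [h3 y hy]

theorem decomp (h : Dat B V₁ V₂ V₃ R) : ∃ R₁ R₂ R₃ : V →ₗ[ℝ] V →ₗ[ℝ] Module.End ℝ V,
    IsCurv (soPart B V₁ (V₂ ⊔ V₃)) R₁ ∧
    (∀ x y : V, x ∈ V₂ ⊔ V₃ ∨ y ∈ V₂ ⊔ V₃ → R₁ x y = 0) ∧
    IsCurv (soPart B V₂ (V₁ ⊔ V₃)) R₂ ∧
    (∀ x y : V, x ∈ V₁ ⊔ V₃ ∨ y ∈ V₁ ⊔ V₃ → R₂ x y = 0) ∧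
    IsCurv (soPart B V₃ (V₁ ⊔ V₂)) R₃ ∧
    (∀ x y : V, x ∈ V₁ ⊔ V₂ ∨ y ∈ V₁ ⊔ V₂ → R₃ x y = 0) ∧
    R = R₁ + R₂ + R₃ := by
  obtain ⟨P, p1, p2, p3⟩ := h.exists_proj
  obtain ⟨Q, q1, q2, q3⟩ := h.swap12.exists_proj
  obtain ⟨S, s1, s2, s3⟩ := h.swap23.swap12.exists_proj
  obtain ⟨a1, a2⟩ := h.part p1 p2 p3
  obtain ⟨b1, b2⟩ := h.swap12.part q1 q2 q3
  obtain ⟨c1, c2⟩ := h.swap23.swap12.part s1 s2 s3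
  refine ⟨_, _, _, a1, a2, b1, b2, c1, c2, ?_⟩
  have hsum : ∀ x, x = P x + Q x + S x := fun x => by
    obtain ⟨a, ha, b, hb, c, hc, rfl⟩ := h.top x
    simp only [map_add]
    rw [p2 a ha, q2 b hb, s2 c hc, p3 b (Submodule.mem_sup_left hb),
      p3 c (Submodule.mem_sup_right hc), q3 a (Submodule.mem_sup_left ha),
      q3 c (Submodule.mem_sup_right hc), s3 a (Submodule.mem_sup_left ha),
      s3 b (Submodule.mem_sup_right hb)]
    abel
  refine LinearMap.ext₂ fun x y => ?_
  have e : R x y = R (P x + Q x + S x) (P y + Q y + S y) := by rw [← hsum x, ← hsum y]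
  rw [e]
  simp only [map_add, LinearMap.add_apply, LinearMap.compl₁₂_apply]
  rw [h.cross (p1 x) (q1 y), h.swap12.cross (q1 x) (p1 y), h.swap23.cross (p1 x) (s1 y),
    h.swap12.swap23.cross (q1 x) (s1 y), h.swap23.swap12.cross (s1 x) (p1 y),
    h.swap12.swap23.swap12.cross (s1 x) (q1 y)]
  abel

end Dat

/-- Let `V = V₁ ⊕ V₂ ⊕ V₃` be an orthogonal decomposition of a pseudo-Euclidean
space into three nonzero nondegenerate subspaces.  Then
`ℛ(so(V₁) ⊕ so(V₂) ⊕ so(V₃) ⊕ ℝ·id) = ℛ(so(V₁)) ⊕ ℛ(so(V₂)) ⊕ ℛ(so(V₃))`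
(each summand extended by zero); in particular, for arbitrary subalgebras
`𝔥ᵢ ⊆ so(Vᵢ)`, the algebra `𝔥₁ ⊕ 𝔥₂ ⊕ 𝔥₃ ⊕ ℝ·id` is not a Berger algebra. -/
theorem conformal_triple_sum_curvature
    [FiniteDimensional ℝ V] (B : LinearMap.BilinForm ℝ V)
    (hsymm : ∀ x y, B x y = B y x) (hnd : ∀ x, (∀ y, B x y = 0) → x = 0)
    (V₁ V₂ V₃ : Submodule ℝ V)
    (hV1 : V₁ ≠ ⊥) (hV2 : V₂ ≠ ⊥) (hV3 : V₃ ≠ ⊥)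
    (hnd1 : IsNondegOn B V₁) (hnd2 : IsNondegOn B V₂) (hnd3 : IsNondegOn B V₃)
    (horth12 : ∀ x ∈ V₁, ∀ y ∈ V₂, B x y = 0)
    (horth13 : ∀ x ∈ V₁, ∀ y ∈ V₃, B x y = 0)
    (horth23 : ∀ x ∈ V₂, ∀ y ∈ V₃, B x y = 0)
    (hind1 : V₁ ⊓ (V₂ ⊔ V₃) = ⊥) (hind2 : V₂ ⊓ (V₁ ⊔ V₃) = ⊥)
    (hind3 : V₃ ⊓ (V₁ ⊔ V₂) = ⊥) (hsup : V₁ ⊔ V₂ ⊔ V₃ = ⊤) :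
    (∀ R : V →ₗ[ℝ] V →ₗ[ℝ] Module.End ℝ V,
      IsCurv
          {F | ∃ c : ℝ, ∃ A₁ ∈ soPart B V₁ (V₂ ⊔ V₃), ∃ A₂ ∈ soPart B V₂ (V₁ ⊔ V₃),
            ∃ A₃ ∈ soPart B V₃ (V₁ ⊔ V₂),
            F = c • (1 : Module.End ℝ V) + A₁ + A₂ + A₃} R ↔
        ∃ R₁ R₂ R₃ : V →ₗ[ℝ] V →ₗ[ℝ] Module.End ℝ V,
          IsCurv (soPart B V₁ (V₂ ⊔ V₃)) R₁ ∧
          (∀ x y : V, x ∈ V₂ ⊔ V₃ ∨ y ∈ V₂ ⊔ V₃ → R₁ x y = 0) ∧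
          IsCurv (soPart B V₂ (V₁ ⊔ V₃)) R₂ ∧
          (∀ x y : V, x ∈ V₁ ⊔ V₃ ∨ y ∈ V₁ ⊔ V₃ → R₂ x y = 0) ∧
          IsCurv (soPart B V₃ (V₁ ⊔ V₂)) R₃ ∧
          (∀ x y : V, x ∈ V₁ ⊔ V₂ ∨ y ∈ V₁ ⊔ V₂ → R₃ x y = 0) ∧
          R = R₁ + R₂ + R₃) ∧
    (∀ h₁ h₂ h₃ : Set (Module.End ℝ V),
      IsLieSub h₁ → IsLieSub h₂ → IsLieSub h₃ →
      h₁ ⊆ soPart B V₁ (V₂ ⊔ V₃) → h₂ ⊆ soPart B V₂ (V₁ ⊔ V₃) →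
      h₃ ⊆ soPart B V₃ (V₁ ⊔ V₂) →
      ¬ IsBerger {F | ∃ c : ℝ, ∃ A₁ ∈ h₁, ∃ A₂ ∈ h₂, ∃ A₃ ∈ h₃,
          F = c • (1 : Module.End ℝ V) + A₁ + A₂ + A₃}) := by
  have mk : ∀ R : V →ₗ[ℝ] V →ₗ[ℝ] Module.End ℝ V,
      IsCurv
          {F | ∃ c : ℝ, ∃ A₁ ∈ soPart B V₁ (V₂ ⊔ V₃), ∃ A₂ ∈ soPart B V₂ (V₁ ⊔ V₃),
            ∃ A₃ ∈ soPart B V₃ (V₁ ⊔ V₂),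
            F = c • (1 : Module.End ℝ V) + A₁ + A₂ + A₃} R → Dat B V₁ V₂ V₃ R := by
    rintro R ⟨hs, hm, hb⟩
    refine ⟨hsymm, hV1, hV2, hV3, hnd1, hnd2, hnd3, hind1, hind2, hind3, hsup, hs, hb,
      fun x y z hz => ?_, fun x y z hz => ?_, fun x y z hz => ?_, fun x y => ?_⟩
    · obtain ⟨c, A₁, h1, A₂, h2, A₃, h3, e⟩ := hm x y
      rw [e]
      simp only [LinearMap.add_apply, LinearMap.smul_apply, Module.End.one_apply]
      rw [h2.2.2 z (Submodule.mem_sup_left hz), h3.2.2 z (Submodule.mem_sup_left hz), add_zero,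
        add_zero]
      exact Submodule.add_mem _ (Submodule.smul_mem _ _ hz) (h1.2.1 z hz)
    · obtain ⟨c, A₁, h1, A₂, h2, A₃, h3, e⟩ := hm x y
      rw [e]
      simp only [LinearMap.add_apply, LinearMap.smul_apply, Module.End.one_apply]
      rw [h1.2.2 z (Submodule.mem_sup_left hz), h3.2.2 z (Submodule.mem_sup_right hz), add_zero,
        add_zero]
      exact Submodule.add_mem _ (Submodule.smul_mem _ _ hz) (h2.2.1 z hz)
    · obtain ⟨c, A₁, h1, A₂, h2, A₃, h3, e⟩ := hm x y
      rw [e]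
      simp only [LinearMap.add_apply, LinearMap.smul_apply, Module.End.one_apply]
      rw [h1.2.2 z (Submodule.mem_sup_right hz), h2.2.2 z (Submodule.mem_sup_right hz), add_zero,
        add_zero]
      exact Submodule.add_mem _ (Submodule.smul_mem _ _ hz) (h3.2.1 z hz)
    · obtain ⟨c, A₁, h1, A₂, h2, A₃, h3, e⟩ := hm x y
      refine ⟨2 * c, fun z w => ?_⟩
      rw [e]
      simp only [LinearMap.add_apply, LinearMap.smul_apply, Module.End.one_apply, map_add,
        map_smul, smul_eq_mul]
      linarith [h1.1 z w, h2.1 z w, h3.1 z w]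
  refine ⟨fun R => ⟨fun hR => (mk R hR).decomp, ?_⟩, ?_⟩
  · rintro ⟨R₁, R₂, R₃, h1, -, h2, -, h3, -, rfl⟩
    refine ⟨fun x y => ?_, fun x y => ?_, fun x y z => ?_⟩
    · simp only [LinearMap.add_apply]
      rw [h1.1 x y, h2.1 x y, h3.1 x y]
      abel
    · exact ⟨0, _, h1.2.1 x y, _, h2.2.1 x y, _, h3.2.1 x y, by simp⟩
    · simp only [LinearMap.add_apply]
      have e : R₁ x y z + R₂ x y z + R₃ x y z + (R₁ y z x + R₂ y z x + R₃ y z x)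
          + (R₁ z x y + R₂ z x y + R₃ z x y) = (R₁ x y z + R₁ y z x + R₁ z x y)
          + (R₂ x y z + R₂ y z x + R₂ z x y) + (R₃ x y z + R₃ y z x + R₃ z x y) := by abel
      rw [e, h1.2.2, h2.2.2, h3.2.2]
      simp
  · intro h₁ h₂ h₃ l1 l2 l3 s1 s2 s3 hB
    have hone : (1 : Module.End ℝ V) ∈ curvSpan {F | ∃ c : ℝ, ∃ A₁ ∈ h₁, ∃ A₂ ∈ h₂, ∃ A₃ ∈ h₃,
          F = c • (1 : Module.End ℝ V) + A₁ + A₂ + A₃} := by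
      rw [← SetLike.mem_coe, hB]
      exact ⟨1, 0, l1.1, 0, l2.1, 0, l3.1, by simp⟩
    have hall : ∀ F ∈ curvSpan {F | ∃ c : ℝ, ∃ A₁ ∈ h₁, ∃ A₂ ∈ h₂, ∃ A₃ ∈ h₃,
          F = c • (1 : Module.End ℝ V) + A₁ + A₂ + A₃}, F ∈ soSet B := by
      intro F hF
      refine Submodule.span_induction ?_ ?_ ?_ ?_ hF
      · rintro _ ⟨R, hR, x, y, rfl⟩
        have hD := mk R ⟨hR.1, fun x y => ?_, hR.2.2⟩
        · obtain ⟨R₁, R₂, R₃, c1, -, c2, -, c3, -, rfl⟩ := hD.decomp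
          intro z w
          simp only [LinearMap.add_apply, map_add]
          linarith [(c1.2.1 x y).1 z w, (c2.2.1 x y).1 z w, (c3.2.1 x y).1 z w]
        · obtain ⟨c, A₁, a1, A₂, a2, A₃, a3, e⟩ := hR.2.1 x y
          exact ⟨c, A₁, s1 a1, A₂, s2 a2, A₃, s3 a3, e⟩
      · intro z w
        simp
      · intro F G _ _ f g z w
        simp only [LinearMap.add_apply, map_add]
        linarith [f z w, g z w]
      · intro c F _ f z w
        simp only [LinearMap.smul_apply, map_smul, smul_eq_mul]
        rw [← mul_add, f z w, mul_zero]
    have h1 := hall _ hone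
    apply hV1
    rw [Submodule.eq_bot_iff]
    intro x _
    apply hnd
    intro y
    have := h1 x y
    simp only [Module.End.one_apply] at this
    linarith

end Weyl
end
end

section
/- Every algebraic curvature tensor R ∈ ℛ(co(1,n+1)_{ℝp}) is uniquely determined by data μ, λ ∈ ℝ, X₀, Z₀ ∈ ℝⁿ, a linear map γ : ℝⁿ → ℝ, P ∈ 𝒫(so(n)), a symmetric endomorphism K of ℝⁿ, and linear maps S : Λ²ℝⁿ → so(n), τ : Λ²ℝⁿ → ℝ with S + τ·id_{ℝⁿ} ∈ ℛ(co(n)), via the equalities R(p,q) = (μ, λ, A₀, X₀), R(p,V) = ((Z₀,V), (Z₀,V), Z₀∧V, −(A₀ + μ·id_{ℝⁿ})V), R(U,V) = ((A₀U,V), (A₀U,V), S(U,V), L(U,V)), R(U,q) = (γ(U), (U,X₀) − γ(U), P(U), K(U)) for all U, V ∈ ℝⁿ, where A₀ ∈ so(n) is defined by τ(U,V) = (A₀U,V) and L(U,V) := P(V)U + γ(V)U − P(U)V − γ(U)V. Conversely, every such collection of data defines by these formulas an element of ℛ(co(1,n+1)_{ℝp}); the correspondence is a linear bijection. -/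
open Module

noncomputable section

namespace Weyl

variable {V : Type*} [AddCommGroup V] [Module ℝ V]

/-- The Euclidean dot product on `Fin n → ℝ`. -/
def dotE (n : ℕ) : LinearMap.BilinForm ℝ (Fin n → ℝ) :=
  LinearMap.mk₂ ℝ (fun x y => ∑ i, x i * y i)
    (fun x x' y => by simp [add_mul, Finset.sum_add_distrib])
    (fun c x y => by simp [Finset.mul_sum, mul_assoc])
    (fun x y y' => by simp [mul_add, Finset.sum_add_distrib])
    (fun c x y => by
      simp only [Pi.smul_apply, smul_eq_mul, Finset.mul_sum]
      exact Finset.sum_congr rfl fun i _ => by ring)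

/-- Minkowski space `ℝ^{1,n+1}` in Witt coordinates: the vector `(v, x, u)`
represents `v·p + x + u·q` with respect to a Witt basis `p, e₁, …, eₙ, q`. -/
abbrev Mink (n : ℕ) := ℝ × (Fin n → ℝ) × ℝ

/-- The Minkowski metric in Witt coordinates: `p, q` are isotropic, `(p,q) = 1`,
and the form is the Euclidean one on the `ℝⁿ`-part orthogonal to `p` and `q`. -/
def minkB (n : ℕ) : LinearMap.BilinForm ℝ (Mink n) :=
  LinearMap.mk₂ ℝ (fun X Y => X.1 * Y.2.2 + X.2.2 * Y.1 + dotE n X.2.1 Y.2.1)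
    (fun X X' Y => by
      simp only [Prod.fst_add, Prod.snd_add, Pi.add_apply, map_add,
        LinearMap.add_apply]
      ring)
    (fun c X Y => by
      simp only [Prod.smul_fst, Prod.smul_snd, smul_eq_mul, map_smul,
        LinearMap.smul_apply]
      ring)
    (fun X Y Y' => by
      simp only [Prod.fst_add, Prod.snd_add, Pi.add_apply, map_add,
        LinearMap.add_apply]
      ring)
    (fun c X Y => by
      simp only [Prod.smul_fst, Prod.smul_snd, smul_eq_mul, map_smul,
        LinearMap.smul_apply]
      ring)

/-- The Witt basis vector `p`. -/
def pvec (n : ℕ) : Mink n := (1, 0, 0)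

/-- The Witt basis vector `q`. -/
def qvec (n : ℕ) : Mink n := (0, 0, 1)

/-- The embedding of `ℝⁿ` into Minkowski space. -/
def emb {n : ℕ} (x : Fin n → ℝ) : Mink n := (0, x, 0)

/-- The element `(b, a, A, X) = b·id + (a, A, X)` of `co(1,n+1)_{ℝp}`:
it maps `p ↦ (a+b)·p`, `U ↦ (X,U)·p + A U + b·U` for `U ∈ ℝⁿ`, and
`q ↦ −X + (b−a)·q`. -/
def coElem {n : ℕ} (b a : ℝ) (A : Module.End ℝ (Fin n → ℝ)) (X : Fin n → ℝ) :
    Module.End ℝ (Mink n) where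
  toFun w := ((b + a) * w.1 + dotE n X w.2.1,
              b • w.2.1 + A w.2.1 - w.2.2 • X,
              (b - a) * w.2.2)
  map_add' w w' := by
    simp only [Prod.fst_add, Prod.snd_add, map_add, Prod.mk_add_mk, add_smul]
    refine Prod.ext (by ring) (Prod.ext ?_ (by ring))
    simp only [smul_add]
    abel
  map_smul' c w := by
    simp only [Prod.smul_fst, Prod.smul_snd, smul_eq_mul, map_smul,
      RingHom.id_apply, Prod.smul_mk]
    refine Prod.ext (by simp; ring) (Prod.ext ?_ (by simp; ring))
    simp only [smul_smul, smul_sub, LinearMap.map_smul]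
    rw [mul_comm]
    module

/-- The Lie algebra `so(n)` of skew-symmetric endomorphisms of Euclidean `ℝⁿ`. -/
def soE (n : ℕ) : Set (Module.End ℝ (Fin n → ℝ)) := soSet (dotE n)

/-- The subalgebra `co(1,n+1)_{ℝp}` of `co(1,n+1)` preserving the isotropic line `ℝp`,
whose elements are written `(b, a, A, X)`. -/
def coRp (n : ℕ) : Set (Module.End ℝ (Mink n)) :=
  {F | ∃ b a : ℝ, ∃ A ∈ soE n, ∃ X : Fin n → ℝ, F = coElem b a A X}

/-- The data determining an algebraic curvature tensor of type `co(1,n+1)_{ℝp}`. -/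
structure CurvData (n : ℕ) where
  mu : ℝ
  lam : ℝ
  X0 : Fin n → ℝ
  Z0 : Fin n → ℝ
  gam : (Fin n → ℝ) →ₗ[ℝ] ℝ
  P : (Fin n → ℝ) →ₗ[ℝ] Module.End ℝ (Fin n → ℝ)
  K : Module.End ℝ (Fin n → ℝ)
  A0 : Module.End ℝ (Fin n → ℝ)
  S : (Fin n → ℝ) →ₗ[ℝ] (Fin n → ℝ) →ₗ[ℝ] Module.End ℝ (Fin n → ℝ)
  tau : (Fin n → ℝ) →ₗ[ℝ] (Fin n → ℝ) →ₗ[ℝ] ℝ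

/-- The side conditions on the data: `P ∈ 𝒫(so(n))`, `K` symmetric, `S`, `τ`
antisymmetric with `S + τ·id ∈ ℛ(co(n))` (Bianchi identity), and `A₀ ∈ so(n)`
defined by `τ(U,V) = (A₀U, V)`. -/
def ValidData {n : ℕ} (d : CurvData n) : Prop :=
  (∀ U, d.P U ∈ soE n) ∧
  (∀ x y z, dotE n (d.P x y) z + dotE n (d.P y z) x + dotE n (d.P z x) y = 0) ∧
  (∀ x y, dotE n (d.K x) y = dotE n x (d.K y)) ∧
  (∀ x y, d.S x y = - d.S y x) ∧ (∀ x y, d.S x y ∈ soE n) ∧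
  (∀ x y, d.tau x y = - d.tau y x) ∧
  (∀ x y z, (d.S x y z + d.tau x y • z) + (d.S y z x + d.tau y z • x) +
      (d.S z x y + d.tau z x • y) = 0) ∧
  d.A0 ∈ soE n ∧ (∀ U W, d.tau U W = dotE n (d.A0 U) W)

/-- `L(U,V) = P(V)U + γ(V)U − P(U)V − γ(U)V`. -/
def Lmap {n : ℕ} (d : CurvData n) (U W : Fin n → ℝ) : Fin n → ℝ :=
  d.P W U + d.gam W • U - d.P U W - d.gam U • W

/-- The curvature tensor `R` is given by the data `d` via the four defining
equalities of Theorem 6 (Galaev's parametrization). -/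
def Matches {n : ℕ} (R : Mink n →ₗ[ℝ] Mink n →ₗ[ℝ] Module.End ℝ (Mink n))
    (d : CurvData n) : Prop :=
  R (pvec n) (qvec n) = coElem d.mu d.lam d.A0 d.X0 ∧
  (∀ W : Fin n → ℝ, R (pvec n) (emb W) =
    coElem (dotE n d.Z0 W) (dotE n d.Z0 W) (wedge (dotE n) d.Z0 W)
      (-(d.A0 W + d.mu • W))) ∧
  (∀ U W : Fin n → ℝ, R (emb U) (emb W) =
    coElem (dotE n (d.A0 U) W) (dotE n (d.A0 U) W) (d.S U W) (Lmap d U W)) ∧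
  (∀ U : Fin n → ℝ, R (emb U) (qvec n) =
    coElem (d.gam U) (dotE n U d.X0 - d.gam U) (d.P U) (d.K U))

section Helpers

variable {n : ℕ}

theorem dotE_apply (x y : Fin n → ℝ) : dotE n x y = ∑ i, x i * y i := rfl

theorem dotE_comm (x y : Fin n → ℝ) : dotE n x y = dotE n y x := by
  simp only [dotE_apply, mul_comm]

theorem dotE_single (x : Fin n → ℝ) (i : Fin n) : dotE n x (Pi.single i 1) = x i := by
  simp [dotE_apply, Pi.single_apply]

theorem dotE_ext {x y : Fin n → ℝ} (h : ∀ w, dotE n x w = dotE n y w) : x = y := by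
  funext i
  rw [← dotE_single x i, ← dotE_single y i, h]

theorem dotE_riesz (f : (Fin n → ℝ) →ₗ[ℝ] ℝ) : ∃ z, ∀ w, dotE n z w = f w := by
  refine ⟨fun i => f (Pi.single i 1), fun w => ?_⟩
  rw [LinearMap.pi_apply_eq_sum_univ f w, dotE_apply]
  refine Finset.sum_congr rfl fun i _ => ?_
  rw [smul_eq_mul, mul_comm]
  congr 2
  funext j
  simp [Pi.single_apply, eq_comm]

theorem wedge_apply (x y z : Fin n → ℝ) :
    wedge (dotE n) x y z = dotE n x z • y - dotE n y z • x := rfl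

theorem coElem_apply (b a : ℝ) (A : Module.End ℝ (Fin n → ℝ)) (X : Fin n → ℝ) (w : Mink n) :
    coElem b a A X w = ((b + a) * w.1 + dotE n X w.2.1,
              b • w.2.1 + A w.2.1 - w.2.2 • X, (b - a) * w.2.2) := rfl

theorem coElem_add (b a b' a' : ℝ) (A A' : Module.End ℝ (Fin n → ℝ)) (X X' : Fin n → ℝ) :
    coElem b a A X + coElem b' a' A' X' = coElem (b + b') (a + a') (A + A') (X + X') := by
  refine LinearMap.ext fun w => ?_
  simp only [LinearMap.add_apply, coElem_apply, Prod.mk_add_mk, map_add]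
  refine Prod.ext (by simp only; ring) (Prod.ext (by simp only; module) (by simp only; ring))

theorem coElem_smul (c b a : ℝ) (A : Module.End ℝ (Fin n → ℝ)) (X : Fin n → ℝ) :
    c • coElem b a A X = coElem (c * b) (c * a) (c • A) (c • X) := by
  refine LinearMap.ext fun w => ?_
  simp only [LinearMap.smul_apply, coElem_apply, Prod.smul_mk, map_smul, smul_eq_mul]
  refine Prod.ext (by simp only; ring) (Prod.ext (by simp only; module) (by simp only; ring))

theorem coElem_neg (b a : ℝ) (A : Module.End ℝ (Fin n → ℝ)) (X : Fin n → ℝ) :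
    - coElem b a A X = coElem (-b) (-a) (-A) (-X) := by
  refine LinearMap.ext fun w => ?_
  simp only [LinearMap.neg_apply, coElem_apply, Prod.neg_mk, map_neg]
  refine Prod.ext (by simp only; ring) (Prod.ext (by simp only; module) (by simp only; ring))

/-- Linear extraction of `b`. -/
def bL (n : ℕ) : Module.End ℝ (Mink n) →ₗ[ℝ] ℝ where
  toFun F := ((F (pvec n)).1 + (F (qvec n)).2.2) / 2
  map_add' F G := by simp; ring
  map_smul' c F := by simp; ring

/-- Linear extraction of `a`. -/
def aL (n : ℕ) : Module.End ℝ (Mink n) →ₗ[ℝ] ℝ where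
  toFun F := ((F (pvec n)).1 - (F (qvec n)).2.2) / 2
  map_add' F G := by simp; ring
  map_smul' c F := by simp; ring

/-- Linear extraction of `X`. -/
def XL (n : ℕ) : Module.End ℝ (Mink n) →ₗ[ℝ] (Fin n → ℝ) where
  toFun F := - (F (qvec n)).2.1
  map_add' F G := by simp; abel
  map_smul' c F := by simp

/-- The embedding as a linear map. -/
def embL (n : ℕ) : (Fin n → ℝ) →ₗ[ℝ] Mink n where
  toFun := emb
  map_add' x y := by simp [emb]
  map_smul' c x := by simp [emb]

theorem embL_apply (x : Fin n → ℝ) : embL n x = emb x := rfl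

/-- Linear extraction of `A`. -/
def AL (n : ℕ) : Module.End ℝ (Mink n) →ₗ[ℝ] Module.End ℝ (Fin n → ℝ) where
  toFun F := (LinearMap.fst ℝ _ _ ∘ₗ LinearMap.snd ℝ _ _ ∘ₗ F ∘ₗ embL n) - bL n F • 1
  map_add' F G := by
    refine LinearMap.ext fun w => ?_
    simp [add_smul]; abel
  map_smul' c F := by
    refine LinearMap.ext fun w => ?_
    simp [smul_sub, mul_smul]

theorem bL_coElem (b a : ℝ) (A : Module.End ℝ (Fin n → ℝ)) (X : Fin n → ℝ) :
    bL n (coElem b a A X) = b := by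
  simp [bL, coElem_apply, pvec, qvec]

theorem aL_coElem (b a : ℝ) (A : Module.End ℝ (Fin n → ℝ)) (X : Fin n → ℝ) :
    aL n (coElem b a A X) = a := by
  simp [aL, coElem_apply, pvec, qvec]

theorem XL_coElem (b a : ℝ) (A : Module.End ℝ (Fin n → ℝ)) (X : Fin n → ℝ) :
    XL n (coElem b a A X) = X := by
  simp [XL, coElem_apply, qvec]

theorem AL_coElem (b a : ℝ) (A : Module.End ℝ (Fin n → ℝ)) (X : Fin n → ℝ) :
    AL n (coElem b a A X) = A := by
  refine LinearMap.ext fun w => ?_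
  simp [AL, coElem_apply, bL_coElem, embL_apply, emb]

theorem coElem_inj {b a b' a' : ℝ} {A A' : Module.End ℝ (Fin n → ℝ)} {X X' : Fin n → ℝ}
    (h : coElem b a A X = coElem b' a' A' X') : b = b' ∧ a = a' ∧ A = A' ∧ X = X' := by
  refine ⟨?_, ?_, ?_, ?_⟩
  · rw [← bL_coElem b a A X, h, bL_coElem]
  · rw [← aL_coElem b a A X, h, aL_coElem]
  · rw [← AL_coElem b a A X, h, AL_coElem]
  · rw [← XL_coElem b a A X, h, XL_coElem]

theorem mem_coRp {F : Module.End ℝ (Mink n)} (h : F ∈ coRp n) :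
    F = coElem (bL n F) (aL n F) (AL n F) (XL n F) ∧ AL n F ∈ soE n := by
  obtain ⟨b, a, A, hA, X, rfl⟩ := h
  simp only [bL_coElem, aL_coElem, AL_coElem, XL_coElem]
  exact ⟨trivial, hA⟩

theorem mink_decomp (x : Mink n) : x = x.1 • pvec n + emb x.2.1 + x.2.2 • qvec n := by
  refine Prod.ext ?_ (Prod.ext ?_ ?_) <;> simp [pvec, qvec, emb]

theorem CurvData_ext {d e : CurvData n} (h1 : d.mu = e.mu) (h2 : d.lam = e.lam)
    (h3 : d.X0 = e.X0) (h4 : d.Z0 = e.Z0) (h5 : d.gam = e.gam) (h6 : d.P = e.P)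
    (h7 : d.K = e.K) (h8 : d.A0 = e.A0) (h9 : d.S = e.S) (h10 : d.tau = e.tau) : d = e := by
  cases d; cases e
  simp only at h1 h2 h3 h4 h5 h6 h7 h8 h9 h10
  subst h1 h2 h3 h4 h5 h6 h7 h8 h9 h10
  rfl

theorem data_unique {R : Mink n →ₗ[ℝ] Mink n →ₗ[ℝ] Module.End ℝ (Mink n)} {d e : CurvData n}
    (hd : ValidData d) (he : ValidData e) (md : Matches R d) (me : Matches R e) : d = e := by
  obtain ⟨d1, d2, d3, d4⟩ := md
  obtain ⟨e1, e2, e3, e4⟩ := me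
  obtain ⟨h1, h2, h3, h4⟩ := coElem_inj (d1.symm.trans e1)
  have k2 := fun W => coElem_inj ((d2 W).symm.trans (e2 W))
  have k3 := fun U W => coElem_inj ((d3 U W).symm.trans (e3 U W))
  have k4 := fun U => coElem_inj ((d4 U).symm.trans (e4 U))
  have td := hd.2.2.2.2.2.2.2.2
  have te := he.2.2.2.2.2.2.2.2
  refine CurvData_ext h1 h2 h4 (dotE_ext fun w => (k2 w).1) (LinearMap.ext fun U => (k4 U).1)
    (LinearMap.ext fun U => (k4 U).2.2.1) (LinearMap.ext fun U => (k4 U).2.2.2) h3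
    (LinearMap.ext fun U => LinearMap.ext fun W => (k3 U W).2.2.1)
    (LinearMap.ext fun U => LinearMap.ext fun W => ?_)
  rw [td, te, h3]

theorem curv_unique {g : Set (Module.End ℝ (Mink n))}
    {R R' : Mink n →ₗ[ℝ] Mink n →ₗ[ℝ] Module.End ℝ (Mink n)} {d : CurvData n}
    (hR : IsCurv g R) (hR' : IsCurv g R') (m : Matches R d) (m' : Matches R' d) : R = R' := by
  have self : ∀ (T : Mink n →ₗ[ℝ] Mink n →ₗ[ℝ] Module.End ℝ (Mink n)), IsCurv g T →
      ∀ x, T x x = 0 := fun T hT x => by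
    have h := hT.1 x x
    have h2 : (2 : ℝ) • T x x = 0 := by
      rw [two_smul]
      nth_rewrite 1 [h]
      exact neg_add_cancel _
    exact (smul_eq_zero.mp h2).resolve_left two_ne_zero
  refine LinearMap.ext fun x => LinearMap.ext fun y => ?_
  rw [mink_decomp x, mink_decomp y]
  simp only [map_add, map_smul, LinearMap.add_apply, LinearMap.smul_apply]
  rw [self R hR (pvec n), self R' hR' (pvec n), self R hR (qvec n), self R' hR' (qvec n),
    hR.1 (qvec n) (pvec n), hR'.1 (qvec n) (pvec n),
    hR.1 (qvec n) (emb _), hR'.1 (qvec n) (emb _),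
    hR.1 (emb _) (pvec n), hR'.1 (emb _) (pvec n),
    m.1, m'.1, m.2.2.1, m'.2.2.1]
  simp only [m.2.1, m'.2.1, m.2.2.2, m'.2.2.2]

/-- The tensor built from the data. -/
def Rof (d : CurvData n) : Mink n →ₗ[ℝ] Mink n →ₗ[ℝ] Module.End ℝ (Mink n) :=
  LinearMap.mk₂ ℝ (fun x y =>
    (x.1 * y.2.2 - y.1 * x.2.2) • coElem d.mu d.lam d.A0 d.X0
    + (x.1 • coElem (dotE n d.Z0 y.2.1) (dotE n d.Z0 y.2.1) (wedge (dotE n) d.Z0 y.2.1)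
        (-(d.A0 y.2.1 + d.mu • y.2.1))
      - y.1 • coElem (dotE n d.Z0 x.2.1) (dotE n d.Z0 x.2.1) (wedge (dotE n) d.Z0 x.2.1)
        (-(d.A0 x.2.1 + d.mu • x.2.1)))
    + coElem (dotE n (d.A0 x.2.1) y.2.1) (dotE n (d.A0 x.2.1) y.2.1) (d.S x.2.1 y.2.1)
        (Lmap d x.2.1 y.2.1)
    + (y.2.2 • coElem (d.gam x.2.1) (dotE n x.2.1 d.X0 - d.gam x.2.1) (d.P x.2.1) (d.K x.2.1)
      - x.2.2 • coElem (d.gam y.2.1) (dotE n y.2.1 d.X0 - d.gam y.2.1) (d.P y.2.1) (d.K y.2.1)))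
    (fun x x' y => by
      refine LinearMap.ext fun w => Prod.ext ?_ (Prod.ext ?_ ?_) <;>
      simp only [LinearMap.add_apply, LinearMap.sub_apply, LinearMap.smul_apply, coElem_apply,
        Prod.fst_add, Prod.snd_add, Prod.fst_sub, Prod.snd_sub, Prod.smul_fst, Prod.smul_snd,
        map_add, map_sub, map_neg, map_smul, smul_eq_mul, wedge_apply, Lmap, LinearMap.neg_apply]
      · ring
      · module
      · ring)
    (fun c x y => by
      refine LinearMap.ext fun w => Prod.ext ?_ (Prod.ext ?_ ?_) <;>
      simp only [LinearMap.add_apply, LinearMap.sub_apply, LinearMap.smul_apply, coElem_apply,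
        Prod.fst_add, Prod.snd_add, Prod.fst_sub, Prod.snd_sub, Prod.smul_fst, Prod.smul_snd,
        map_add, map_sub, map_neg, map_smul, smul_eq_mul, wedge_apply, Lmap, LinearMap.neg_apply]
      · ring
      · module
      · ring)
    (fun x y y' => by
      refine LinearMap.ext fun w => Prod.ext ?_ (Prod.ext ?_ ?_) <;>
      simp only [LinearMap.add_apply, LinearMap.sub_apply, LinearMap.smul_apply, coElem_apply,
        Prod.fst_add, Prod.snd_add, Prod.fst_sub, Prod.snd_sub, Prod.smul_fst, Prod.smul_snd,
        map_add, map_sub, map_neg, map_smul, smul_eq_mul, wedge_apply, Lmap, LinearMap.neg_apply]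
      · ring
      · module
      · ring)
    (fun c x y => by
      refine LinearMap.ext fun w => Prod.ext ?_ (Prod.ext ?_ ?_) <;>
      simp only [LinearMap.add_apply, LinearMap.sub_apply, LinearMap.smul_apply, coElem_apply,
        Prod.fst_add, Prod.snd_add, Prod.fst_sub, Prod.snd_sub, Prod.smul_fst, Prod.smul_snd,
        map_add, map_sub, map_neg, map_smul, smul_eq_mul, wedge_apply, Lmap, LinearMap.neg_apply]
      · ring
      · module
      · ring)

theorem Rof_apply (d : CurvData n) (x y : Mink n) : Rof d x y =
    (x.1 * y.2.2 - y.1 * x.2.2) • coElem d.mu d.lam d.A0 d.X0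
    + (x.1 • coElem (dotE n d.Z0 y.2.1) (dotE n d.Z0 y.2.1) (wedge (dotE n) d.Z0 y.2.1)
        (-(d.A0 y.2.1 + d.mu • y.2.1))
      - y.1 • coElem (dotE n d.Z0 x.2.1) (dotE n d.Z0 x.2.1) (wedge (dotE n) d.Z0 x.2.1)
        (-(d.A0 x.2.1 + d.mu • x.2.1)))
    + coElem (dotE n (d.A0 x.2.1) y.2.1) (dotE n (d.A0 x.2.1) y.2.1) (d.S x.2.1 y.2.1)
        (Lmap d x.2.1 y.2.1)
    + (y.2.2 • coElem (d.gam x.2.1) (dotE n x.2.1 d.X0 - d.gam x.2.1) (d.P x.2.1) (d.K x.2.1)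
      - x.2.2 • coElem (d.gam y.2.1) (dotE n y.2.1 d.X0 - d.gam y.2.1) (d.P y.2.1) (d.K y.2.1)) :=
  rfl

theorem Rof_matches (d : CurvData n) : Matches (Rof d) d := by
  have z : coElem 0 0 (0 : Module.End ℝ (Fin n → ℝ)) 0 = 0 := by
    have := coElem_smul 0 0 0 (0 : Module.End ℝ (Fin n → ℝ)) 0
    simpa using this.symm
  have wz : ∀ u : Fin n → ℝ, wedge (dotE n) u 0 = 0 := fun u => by
    refine LinearMap.ext fun w => ?_
    simp [wedge_apply]
  refine ⟨?_, fun W => ?_, fun U W => ?_, fun U => ?_⟩ <;> rw [Rof_apply] <;>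
    simp [pvec, qvec, emb, Lmap, z, wz]

theorem coRp_add {F G : Module.End ℝ (Mink n)} (hF : F ∈ coRp n) (hG : G ∈ coRp n) :
    F + G ∈ coRp n := by
  obtain ⟨b, a, A, hA, X, rfl⟩ := hF
  obtain ⟨b', a', A', hA', X', rfl⟩ := hG
  refine ⟨_, _, A + A', fun x y => ?_, _, coElem_add _ _ _ _ _ _ _ _⟩
  have h1 := hA x y
  have h2 := hA' x y
  simp only [LinearMap.add_apply, map_add]
  linear_combination h1 + h2

theorem coRp_smul {F : Module.End ℝ (Mink n)} (c : ℝ) (hF : F ∈ coRp n) : c • F ∈ coRp n := by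
  obtain ⟨b, a, A, hA, X, rfl⟩ := hF
  refine ⟨_, _, c • A, fun x y => ?_, _, coElem_smul _ _ _ _ _⟩
  have h1 := hA x y
  simp only [LinearMap.smul_apply, map_smul, smul_eq_mul]
  linear_combination c * h1

theorem coRp_sub {F G : Module.End ℝ (Mink n)} (hF : F ∈ coRp n) (hG : G ∈ coRp n) :
    F - G ∈ coRp n := by
  have := coRp_add hF (coRp_smul (-1) hG)
  have e : F - G = F + (-1 : ℝ) • G := by
    refine LinearMap.ext fun w => ?_
    simp only [LinearMap.sub_apply, LinearMap.add_apply, LinearMap.smul_apply]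
    module
  rwa [e]

theorem wedge_mem (z w : Fin n → ℝ) : wedge (dotE n) z w ∈ soE n := by
  intro x y
  simp only [wedge_apply, map_sub, map_smul, LinearMap.sub_apply, LinearMap.smul_apply,
    smul_eq_mul]
  rw [dotE_comm x w, dotE_comm x z]
  ring

theorem Rof_curv (d : CurvData n) (hd : ValidData d) : IsCurv (coRp n) (Rof d) := by
  obtain ⟨hP, hPc, hK, hSa, hS, hta, hB, hA, ht⟩ := hd
  have sk : ∀ x y, dotE n (d.A0 x) y = - dotE n (d.A0 y) x := fun x y => by
    have := hA x y
    rw [dotE_comm x] at this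
    linear_combination this
  refine ⟨fun x y => ?_, fun x y => ?_, fun x y z => ?_⟩
  · have e : coElem (dotE n (d.A0 x.2.1) y.2.1) (dotE n (d.A0 x.2.1) y.2.1) (d.S x.2.1 y.2.1)
        (Lmap d x.2.1 y.2.1) = - coElem (dotE n (d.A0 y.2.1) x.2.1) (dotE n (d.A0 y.2.1) x.2.1)
        (d.S y.2.1 x.2.1) (Lmap d y.2.1 x.2.1) := by
      rw [coElem_neg, sk x.2.1, hSa x.2.1]
      congr 1
      simp only [Lmap]
      abel
    rw [Rof_apply, Rof_apply, e]
    module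
  · rw [Rof_apply]
    exact coRp_add (coRp_add (coRp_add (coRp_smul _ ⟨_, _, _, hA, _, rfl⟩)
      (coRp_sub (coRp_smul _ ⟨_, _, _, wedge_mem _ _, _, rfl⟩)
        (coRp_smul _ ⟨_, _, _, wedge_mem _ _, _, rfl⟩))) ⟨_, _, _, hS _ _, _, rfl⟩)
      (coRp_sub (coRp_smul _ ⟨_, _, _, hP _, _, rfl⟩) (coRp_smul _ ⟨_, _, _, hP _, _, rfl⟩))
  · obtain ⟨x1, x2, x3⟩ := x
    obtain ⟨y1, y2, y3⟩ := y
    obtain ⟨z1, z2, z3⟩ := z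
    have kk : ∀ u v, dotE n (d.K u) v = dotE n (d.K v) u := fun u v => by
      rw [hK, dotE_comm]
    have pk : ∀ u v w, dotE n (d.P u v) w = - dotE n (d.P u w) v := fun u v w => by
      have := hP u v w
      rw [dotE_comm v] at this
      linear_combination this
    refine Prod.ext ?_ (Prod.ext ?_ ?_) <;>
      simp only [Rof_apply, LinearMap.add_apply, LinearMap.sub_apply, LinearMap.smul_apply,
        coElem_apply, LinearMap.neg_apply, Prod.fst_zero, Prod.snd_zero,
        Prod.fst_add, Prod.snd_add, Prod.fst_sub, Prod.snd_sub, Prod.smul_fst, Prod.smul_snd,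
        map_add, map_sub, map_neg, map_smul, smul_eq_mul, wedge_apply, Lmap]
    · rw [sk x2 y2, sk x2 z2, sk y2 z2, kk x2 y2, kk x2 z2, kk y2 z2, pk x2 y2 z2, pk y2 x2 z2,
        pk z2 x2 y2, dotE_comm x2 y2, dotE_comm x2 z2, dotE_comm y2 z2,
        dotE_comm x2 d.X0, dotE_comm y2 d.X0, dotE_comm z2 d.X0]
      have h := hPc x2 y2 z2
      rw [pk x2 y2 z2, pk z2 x2 y2] at h
      linear_combination (-2) * h
    · have h := hB x2 y2 z2
      rw [ht, ht, ht] at h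
      rw [dotE_comm x2 y2, dotE_comm x2 z2, dotE_comm y2 z2]
      linear_combination (norm := module) h
    · ring

theorem skew_sym_zero (A : (Fin n → ℝ) → (Fin n → ℝ) → (Fin n → ℝ))
    (hs : ∀ u v, A u v = A v u) (hk : ∀ u v w, dotE n (A u v) w = - dotE n (A u w) v)
    (u v : Fin n → ℝ) : A u v = 0 := by
  refine dotE_ext fun w => ?_
  have h1 := hk u v w
  have h2 := hk w u v
  have h3 := hk v w u
  rw [hs u w] at h1
  rw [hs w v] at h2
  rw [hs v u] at h3
  simp only [map_zero, LinearMap.zero_apply]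
  linarith

theorem data_exists (R : Mink n →ₗ[ℝ] Mink n →ₗ[ℝ] Module.End ℝ (Mink n))
    (hR : IsCurv (coRp n) R) : ∃ d : CurvData n, ValidData d ∧ Matches R d := by
  obtain ⟨han, hmem, hB⟩ := hR
  obtain ⟨Z0, hZ⟩ := dotE_riesz (bL n ∘ₗ R (pvec n) ∘ₗ embL n)
  simp only [LinearMap.comp_apply, embL_apply] at hZ
  have hform := fun x y => (mem_coRp (hmem x y)).1
  have hso := fun x y => (mem_coRp (hmem x y)).2
  have askew : ∀ {A : Module.End ℝ (Fin n → ℝ)}, A ∈ soE n → ∀ u v,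
      dotE n (A u) v = - dotE n (A v) u := fun {A} h u v => by
    have := h u v
    rw [dotE_comm u] at this
    linear_combination this
  -- Bianchi identities on the basis
  have pqV : ∀ V, aL n (R (pvec n) (emb V)) = bL n (R (pvec n) (emb V)) ∧
      bL n (R (emb V) (qvec n)) + aL n (R (emb V) (qvec n))
        = dotE n (XL n (R (pvec n) (qvec n))) V ∧
      XL n (R (pvec n) (emb V)) =
        -(AL n (R (pvec n) (qvec n)) V + bL n (R (pvec n) (qvec n)) • V) := by
    intro V
    have h := hB (pvec n) (qvec n) (emb V)
    rw [han (qvec n) (emb V), han (emb V) (pvec n), hform (pvec n) (qvec n),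
      hform (emb V) (qvec n), hform (pvec n) (emb V)] at h
    have h1 := congrArg (fun w : Mink n => w.1) h
    have h2 := congrArg (fun w : Mink n => w.2.1) h
    have h3 := congrArg (fun w : Mink n => w.2.2) h
    simp [coElem_apply, pvec, qvec, emb] at h1 h2 h3
    refine ⟨?_, ?_, ?_⟩
    · simp only [pvec, emb]; linarith
    · simp only [pvec, qvec, emb]; linarith
    · simp only [pvec, qvec, emb]
      linear_combination (norm := module) h2
  have pUV : ∀ U V, bL n (R (emb U) (emb V)) + aL n (R (emb U) (emb V)) +
        dotE n (XL n (R (pvec n) (emb U))) V - dotE n (XL n (R (pvec n) (emb V))) U = 0 ∧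
      bL n (R (pvec n) (emb U)) • V + AL n (R (pvec n) (emb U)) V
        - (bL n (R (pvec n) (emb V)) • U + AL n (R (pvec n) (emb V)) U) = 0 := by
    intro U V
    have h := hB (pvec n) (emb U) (emb V)
    rw [han (emb V) (pvec n), hform (pvec n) (emb U),
      hform (emb U) (emb V), hform (pvec n) (emb V)] at h
    have h1 := congrArg (fun w : Mink n => w.1) h
    have h2 := congrArg (fun w : Mink n => w.2.1) h
    simp [coElem_apply, pvec, emb] at h1 h2
    refine ⟨?_, ?_⟩
    · simp only [pvec, emb]; linarith
    · simp only [pvec, emb]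
      linear_combination (norm := module) h2
  have UVq : ∀ U V, bL n (R (emb U) (emb V)) = aL n (R (emb U) (emb V)) ∧
      dotE n (XL n (R (emb V) (qvec n))) U = dotE n (XL n (R (emb U) (qvec n))) V ∧
      XL n (R (emb U) (emb V)) = AL n (R (emb V) (qvec n)) U + bL n (R (emb V) (qvec n)) • U
        - AL n (R (emb U) (qvec n)) V - bL n (R (emb U) (qvec n)) • V := by
    intro U V
    have h := hB (emb U) (emb V) (qvec n)
    rw [han (qvec n) (emb U), hform (emb U) (emb V),
      hform (emb V) (qvec n), hform (emb U) (qvec n)] at h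
    have h1 := congrArg (fun w : Mink n => w.1) h
    have h2 := congrArg (fun w : Mink n => w.2.1) h
    have h3 := congrArg (fun w : Mink n => w.2.2) h
    simp [coElem_apply, qvec, emb] at h1 h2 h3
    refine ⟨?_, ?_, ?_⟩
    · simp only [emb]; linarith
    · simp only [qvec, emb]; linarith
    · simp only [qvec, emb]
      linear_combination (norm := module) (-1 : ℝ) • h2
  have UVW : ∀ U V W, dotE n (XL n (R (emb U) (emb V))) W + dotE n (XL n (R (emb V) (emb W))) U
        + dotE n (XL n (R (emb W) (emb U))) V = 0 ∧
      (AL n (R (emb U) (emb V)) W + bL n (R (emb U) (emb V)) • W)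
       + (AL n (R (emb V) (emb W)) U + bL n (R (emb V) (emb W)) • U)
       + (AL n (R (emb W) (emb U)) V + bL n (R (emb W) (emb U)) • V) = 0 := by
    intro U V W
    have h := hB (emb U) (emb V) (emb W)
    rw [hform (emb U) (emb V), hform (emb V) (emb W), hform (emb W) (emb U)] at h
    have h1 := congrArg (fun w : Mink n => w.1) h
    have h2 := congrArg (fun w : Mink n => w.2.1) h
    simp [coElem_apply, emb] at h1 h2
    refine ⟨?_, ?_⟩
    · simp only [emb]; linarith
    · simp only [emb]
      linear_combination (norm := module) h2
  have hA0 := askew (hso (pvec n) (qvec n))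
  have htau : ∀ U W, bL n (R (emb U) (emb W)) = dotE n (AL n (R (pvec n) (qvec n)) U) W := by
    intro U W
    have h1 := (pUV U W).1
    rw [(pqV U).2.2, (pqV W).2.2, ← (UVq U W).1] at h1
    simp only [map_neg, map_add, map_smul, LinearMap.neg_apply, LinearMap.add_apply,
      LinearMap.smul_apply, smul_eq_mul] at h1
    rw [hA0 W U, dotE_comm W U] at h1
    linarith
  have hwedge : ∀ W, AL n (R (pvec n) (emb W)) = wedge (dotE n) Z0 W := by
    intro W
    refine LinearMap.ext fun V => ?_
    have key := skew_sym_zero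
      (fun u v => AL n (R (pvec n) (emb u)) v - wedge (dotE n) Z0 u v) (fun u v => ?_)
      (fun u v w => ?_) W V
    · exact sub_eq_zero.mp key
    · have h := (pUV u v).2
      rw [← hZ, ← hZ] at h
      simp only [wedge_apply]
      rw [dotE_comm u v]
      linear_combination (norm := module) h
    · have h1 := askew (hso (pvec n) (emb u)) v w
      have h2 := askew (wedge_mem Z0 u) v w
      simp only [map_sub, LinearMap.sub_apply]
      linear_combination h1 - h2
  have hP := fun U => askew (hso (emb U) (qvec n))
  refine ⟨{ mu := bL n (R (pvec n) (qvec n))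
            lam := aL n (R (pvec n) (qvec n))
            X0 := XL n (R (pvec n) (qvec n))
            Z0 := Z0
            gam := bL n ∘ₗ R.flip (qvec n) ∘ₗ embL n
            P := AL n ∘ₗ R.flip (qvec n) ∘ₗ embL n
            K := XL n ∘ₗ R.flip (qvec n) ∘ₗ embL n
            A0 := AL n (R (pvec n) (qvec n))
            S := (R.compl₁₂ (embL n) (embL n)).compr₂ (AL n)
            tau := (R.compl₁₂ (embL n) (embL n)).compr₂ (bL n) },
    ⟨fun U => hso _ _, fun x y z => ?_, fun x y => ?_, fun x y => ?_, fun x y => hso _ _,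
      fun x y => ?_, fun x y z => ?_, hso _ _, fun U W => htau U W⟩,
    hform _ _, fun W => ?_, fun U W => ?_, fun U => ?_⟩
  · change dotE n (AL n (R (emb x) (qvec n)) y) z + dotE n (AL n (R (emb y) (qvec n)) z) x
      + dotE n (AL n (R (emb z) (qvec n)) x) y = 0
    have h := (UVW x y z).1
    rw [(UVq x y).2.2, (UVq y z).2.2, (UVq z x).2.2] at h
    simp only [map_sub, map_add, map_smul, LinearMap.sub_apply, LinearMap.add_apply,
      LinearMap.smul_apply, smul_eq_mul] at h
    rw [hP y x z, hP z y x, hP x z y, dotE_comm x z, dotE_comm y z, dotE_comm x y] at h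
    linarith
  · change dotE n (XL n (R (emb x) (qvec n))) y = dotE n x (XL n (R (emb y) (qvec n)))
    rw [dotE_comm x, (UVq x y).2.1]
  · change AL n (R (emb x) (emb y)) = - AL n (R (emb y) (emb x))
    rw [han (emb x), map_neg]
  · change bL n (R (emb x) (emb y)) = - bL n (R (emb y) (emb x))
    rw [han (emb x), map_neg]
  · exact (UVW x y z).2
  · refine (hform _ _).trans ?_
    rw [(pqV W).1, hZ, hwedge, (pqV W).2.2]
  · refine (hform _ _).trans ?_
    rw [← (UVq U W).1, htau, (UVq U W).2.2]
    rfl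
  · refine (hform _ _).trans ?_
    have h : aL n (R (emb U) (qvec n)) =
        dotE n U (XL n (R (pvec n) (qvec n))) - bL n (R (emb U) (qvec n)) := by
      rw [dotE_comm]
      linarith [(pqV U).2.1]
    rw [h]
    rfl

end Helpers

/-- Every algebraic curvature tensor of type `co(1,n+1)_{ℝp}` is uniquely
determined by data `(μ, λ, X₀, Z₀, γ, P, K, A₀, S, τ)` via the four defining
equalities; conversely, every valid collection of data defines a unique such
curvature tensor.  The correspondence is a (linear) bijection. -/
theorem curvature_coRp_parametrization (n : ℕ) :
    (∀ R : Mink n →ₗ[ℝ] Mink n →ₗ[ℝ] Module.End ℝ (Mink n),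
      IsCurv (coRp n) R → ∃! d : CurvData n, ValidData d ∧ Matches R d) ∧
    (∀ d : CurvData n, ValidData d →
      ∃! R : Mink n →ₗ[ℝ] Mink n →ₗ[ℝ] Module.End ℝ (Mink n),
        IsCurv (coRp n) R ∧ Matches R d) := by
  refine ⟨fun R hR => ?_, fun d hd => ⟨Rof d, ⟨Rof_curv d hd, Rof_matches d⟩,
    fun R' h => curv_unique h.1 (Rof_curv d hd) h.2 (Rof_matches d)⟩⟩
  obtain ⟨d, hd, md⟩ := data_exists R hR
  exact ⟨d, ⟨hd, md⟩, fun e he => data_unique he.1 hd he.2 md⟩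

end Weyl
end
end
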